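/- There exists a universal constant c > 0 such that for every n-qubit mixed state ρ and every γ > 0: if 4^n · Σ_{x ∈ 𝔽₂^{2n}} p_ρ(x)³ ≥ γ, then the stabilizer fidelity satisfies F(ρ) ≥ c · γ^{1089}. -/

import Mathlib

open scoped BigOperators ComplexOrder

/-- The phase space `𝔽₂^{2n}`, written as pairs `(a, b)` with `a, b ∈ 𝔽₂ⁿ`. -/
abbrev PhaseSpace (n : ℕ) := (Fin n → ZMod 2) × (Fin n → ZMod 2)

/-- The symplectic product `[x, y] = a·d + b·c` for `x = (a,b)`, `y = (c,d)`. -/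
def sympl {n : ℕ} (x y : PhaseSpace n) : ZMod 2 :=
  ∑ i, x.1 i * y.2 i + ∑ i, x.2 i * y.1 i

/-- The symplectic Fourier transform `f̂(a) = 4^{-n} ∑_x (-1)^{[a,x]} f(x)`. -/
noncomputable def sft {n : ℕ} (f : PhaseSpace n → ℝ) (a : PhaseSpace n) : ℝ :=
  (1 / 4 ^ n) * ∑ x, (-1 : ℝ) ^ (sympl a x).val * f x

/-- The symplectic complement of a set `S ⊆ 𝔽₂^{2n}`. -/
def symplComplement {n : ℕ} (S : Set (PhaseSpace n)) : Set (PhaseSpace n) :=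
  {x | ∀ a ∈ S, sympl x a = 0}

/-- The Weyl operator `W_x = i^{a·b} X^a Z^b` for `x = (a,b)`, as a `2^n × 2^n` matrix
indexed by `𝔽₂ⁿ`: `(W_x)_{k,j} = i^{a·b} (-1)^{b·j} [k = j + a]`. -/
noncomputable def Weyl {n : ℕ} (x : PhaseSpace n) :
    Matrix (Fin n → ZMod 2) (Fin n → ZMod 2) ℂ :=
  fun k j => Complex.I ^ (∑ i, (x.1 i).val * (x.2 i).val) *
    (if k = j + x.1 then (-1 : ℂ) ^ (∑ i, (x.2 i).val * (j i).val) else 0)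

/-- `p_H(x) = 2^{-n} tr(W_x H)²` (the trace is real for Hermitian `H`). -/
noncomputable def pFun {n : ℕ} (H : Matrix (Fin n → ZMod 2) (Fin n → ZMod 2) ℂ)
    (x : PhaseSpace n) : ℝ :=
  ((Weyl x * H).trace.re) ^ 2 / 2 ^ n

/-- A set is Lagrangian if it equals its symplectic complement. -/
def IsLagrangian {n : ℕ} (S : Set (PhaseSpace n)) : Prop :=
  S = symplComplement S

/-- The outer product `|φ⟩⟨φ|` of a vector `φ ∈ ℂ^{2^n}`. -/
noncomputable def outer {n : ℕ} (φ : (Fin n → ZMod 2) → ℂ) :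
    Matrix (Fin n → ZMod 2) (Fin n → ZMod 2) ℂ :=
  Matrix.vecMulVec φ (fun j => starRingEnd ℂ (φ j))

/-- `Weyl(σ) = {x : tr(W_x σ) = ±1}`. -/
def weylSet {n : ℕ} (σ : Matrix (Fin n → ZMod 2) (Fin n → ZMod 2) ℂ) :
    Set (PhaseSpace n) :=
  {x | (Weyl x * σ).trace = 1 ∨ (Weyl x * σ).trace = -1}

/-- A unit vector `φ` is a stabilizer state iff `Weyl(|φ⟩⟨φ|)` is Lagrangian. -/
def IsStabilizerState {n : ℕ} (φ : (Fin n → ZMod 2) → ℂ) : Prop :=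
  (∑ j, Complex.normSq (φ j)) = 1 ∧ IsLagrangian (weylSet (outer φ))

/-- The stabilizer fidelity `F(ρ) = max_{stabilizer |φ⟩} ⟨φ|ρ|φ⟩ = max tr(ρ|φ⟩⟨φ|)`. -/
noncomputable def stabFidelity {n : ℕ}
    (ρ : Matrix (Fin n → ZMod 2) (Fin n → ZMod 2) ℂ) : ℝ :=
  ⨆ φ : {φ : (Fin n → ZMod 2) → ℂ // IsStabilizerState φ}, ((ρ * outer φ.1).trace).re

/-!
Put `f x = tr(W_x ρ)²`, so that `0 ≤ f ≤ 1`. Since `tr ρ² ≤ 1` we have `∑ f ≤ 2 ^ n`, and the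
hypothesis says `γ 2 ^ n ≤ ∑ f ³`, so the level set `S = {f ≥ γ / 2}` has at least `(γ / 2) 2 ^ n`
points. Nonnegativity of the variance of `∑ x ∈ S, W_x ⊗ W_x` in the state `ρ ⊗ ρ` reads
`(∑_S f)² ≤ ∑ x y ∈ S, (-1) ^ [x, y] f (x + y)`; hence a proportion `γ² / 8` of the pairs in `S`
have their sum in `{f ≥ γ² / 8}`, a set of at most `(8 / γ²) 2 ^ n` points.

The entropic proof of the polynomial Freiman–Ruzsa theorem over `𝔽₂`, by Gowers, Green, Manners and
Tao, now produces a coset `z + H` with a large intersection with `S`: an entropic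
Balog–Szemerédi–Gowers argument passes from the dense set of pairs to independent variables, and a
minimiser of the functional `τ` has zero entropic Ruzsa distance, hence is uniform on a coset.

The uncertainty relation on `z + H` bounds `(∑_{z + H} f)²` by `|H|` times the sum of `f` over the
isotropic subgroup `H ∩ H^⊥`. Extending the latter to a Lagrangian subgroup `L`, Parseval in the
basis of the stabilizer states of `L` bounds the sum of `f` over `L` by `2 ^ n F(ρ)`.
-/

namespace EntropicPFR

open Finset Real

/-! ### Entropy -/

section Entropy

variable {Ω Ω' α β γ : Type*} [Fintype Ω] [Fintype Ω']

open scoped Classical in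
/-- The law of the random variable `X` on the finite weighted space `(Ω, p)`. -/
noncomputable def law (p : Ω → ℝ) (X : Ω → α) (a : α) : ℝ :=
  ∑ ω with X ω = a, p ω

/-- The Shannon entropy of a law on a finite type, in nats. -/
noncomputable def entropy [Fintype α] (p : α → ℝ) : ℝ :=
  ∑ a, negMulLog (p a)

/-- The Shannon entropy `H(X)` of the random variable `X` on `(Ω, p)`. -/
noncomputable def rvEntropy [Fintype α] (p : Ω → ℝ) (X : Ω → α) : ℝ :=
  entropy (law p X)

lemma sum_law_mul [Fintype α] (p : Ω → ℝ) (X : Ω → α) (g : α → ℝ) :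
    ∑ a, law p X a * g a = ∑ ω, p ω * g (X ω) := by
  classical
  simp only [law, sum_mul]
  rw [← sum_fiberwise univ X (fun ω => p ω * g (X ω))]
  refine sum_congr rfl fun a _ => ?_
  convert sum_congr rfl fun ω hω => ?_ using 1
  rw [(mem_filter.mp hω).2]

variable {p : Ω → ℝ} {q : Ω' → ℝ}

lemma law_nonneg (hp : p ∈ stdSimplex ℝ Ω) (X : Ω → α) (a : α) : 0 ≤ law p X a :=
  sum_nonneg fun ω _ => hp.1 ω

lemma law_mem_stdSimplex [Fintype α] (hp : p ∈ stdSimplex ℝ Ω) (X : Ω → α) :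
    law p X ∈ stdSimplex ℝ α :=
  ⟨law_nonneg hp X, by simpa [hp.2] using sum_law_mul p X fun _ => 1⟩

lemma law_law [Fintype α] (p : Ω → ℝ) (X : Ω → α) (f : α → β) :
    law (law p X) f = law p (fun ω => f (X ω)) := by
  classical
  funext b
  simpa [law, sum_filter] using sum_law_mul p X fun a => if f a = b then 1 else 0

lemma law_id (p : Ω → ℝ) : law p (fun ω => ω) = p := by
  classical
  funext a
  simp [law, sum_filter]

lemma le_law (hp : p ∈ stdSimplex ℝ Ω) (X : Ω → α) (ω : Ω) : p ω ≤ law p X (X ω) := by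
  classical
  exact single_le_sum (f := p) (fun ω _ => hp.1 ω) (by simp)

lemma law_pos (hp : p ∈ stdSimplex ℝ Ω) (X : Ω → α) {ω : Ω} (hω : 0 < p ω) :
    0 < law p X (X ω) :=
  hω.trans_le (le_law hp X ω)

lemma exists_of_law_ne_zero {X : Ω → α} {a : α} (h : law p X a ≠ 0) :
    ∃ ω, p ω ≠ 0 ∧ X ω = a := by
  classical
  obtain ⟨ω, hω, hne⟩ := exists_ne_zero_of_sum_ne_zero h
  exact ⟨ω, hne, (mem_filter.mp hω).2⟩

lemma law_equiv {p' : Ω' → ℝ} (e : Ω ≃ Ω') (h : ∀ ω, p' (e ω) = p ω) (X : Ω' → α) :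
    law p (fun ω => X (e ω)) = law p' X := by
  classical
  funext a
  simp only [law, sum_filter]
  rw [← e.sum_comp]
  simp [h]

lemma sum_law_pair [Fintype α] (p : Ω → ℝ) (X : Ω → α) (Z : Ω → γ) (z : γ) :
    ∑ a, law p (fun ω => (X ω, Z ω)) (a, z) = law p Z z := by
  classical
  simp only [law, sum_filter]
  rw [sum_comm]
  refine sum_congr rfl fun ω _ => ?_
  by_cases h : Z ω = z <;> simp [h]

/-- The weights `P(x,z) P(y,z) / P(z)` are those of the coupling of `(X, Z)` and `(Y, Z)` that is
conditionally independent over `Z`, so they add up to at most one on the support of `(X, Y, Z)`. -/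
lemma sum_mul_law_ratio_le_one [Finite α] [Finite β] [Finite γ] (hp : p ∈ stdSimplex ℝ Ω)
    (X : Ω → α) (Y : Ω → β) (Z : Ω → γ) :
    ∑ ω, p ω * (law p (fun ω => (X ω, Z ω)) (X ω, Z ω) * law p (fun ω => (Y ω, Z ω)) (Y ω, Z ω) /
      (law p (fun ω => (X ω, Y ω, Z ω)) (X ω, Y ω, Z ω) * law p Z (Z ω))) ≤ 1 := by
  cases nonempty_fintype α
  cases nonempty_fintype β
  cases nonempty_fintype γ
  set A := law p fun ω => (X ω, Z ω)
  set B := law p fun ω => (Y ω, Z ω)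
  set T := law p fun ω => (X ω, Y ω, Z ω)
  have hfibre (z : γ) : ∑ a, ∑ b, A (a, z) * B (b, z) / law p Z z = law p Z z := by
    simp_rw [mul_div_assoc, ← mul_sum, ← sum_div, ← sum_mul]
    rw [sum_law_pair p X Z z, sum_law_pair p Y Z z, ← mul_div_assoc, mul_self_div_self]
  have hterm (t : α × β × γ) : T t * (A (t.1, t.2.2) * B (t.2.1, t.2.2) /
      (T t * law p Z t.2.2)) ≤ A (t.1, t.2.2) * B (t.2.1, t.2.2) / law p Z t.2.2 := by
    have hA : 0 ≤ A (t.1, t.2.2) := law_nonneg hp _ _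
    have hB : 0 ≤ B (t.2.1, t.2.2) := law_nonneg hp _ _
    have hZ : 0 ≤ law p Z t.2.2 := law_nonneg hp _ _
    by_cases h : T t = 0
    · rw [h, zero_mul]
      positivity
    · rw [mul_div_assoc', mul_div_mul_left _ _ h]
  calc _ = ∑ t, T t * (A (t.1, t.2.2) * B (t.2.1, t.2.2) / (T t * law p Z t.2.2)) :=
        (sum_law_mul p (fun ω => (X ω, Y ω, Z ω)) fun t =>
          A (t.1, t.2.2) * B (t.2.1, t.2.2) / (T t * law p Z t.2.2)).symm
    _ ≤ ∑ t : α × β × γ, A (t.1, t.2.2) * B (t.2.1, t.2.2) / law p Z t.2.2 :=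
        sum_le_sum fun t _ => hterm t
    _ = ∑ z, ∑ a, ∑ b, A (a, z) * B (b, z) / law p Z z := by
        simp_rw [Fintype.sum_prod_type, sum_comm (s := (univ : Finset β))]
        rw [sum_comm]
    _ = 1 := by rw [sum_congr rfl fun z _ => hfibre z, (law_mem_stdSimplex hp Z).2]

variable [Fintype α] [Fintype β] [Fintype γ]

lemma rvEntropy_law (p : Ω → ℝ) (X : Ω → α) (f : α → β) :
    rvEntropy (law p X) f = rvEntropy p (fun ω => f (X ω)) := by
  simp only [rvEntropy, law_law]

lemma rvEntropy_id (p : Ω → ℝ) : rvEntropy p (fun ω => ω) = entropy p := by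
  simp only [rvEntropy, law_id]

lemma rvEntropy_eq_neg_sum_mul_log (p : Ω → ℝ) (X : Ω → α) :
    rvEntropy p X = -∑ ω, p ω * log (law p X (X ω)) := by
  simp only [rvEntropy, entropy, negMulLog, ← sum_law_mul p X fun a => log (law p X a), neg_mul,
    sum_neg_distrib]

/-- Entropy depends only on the partition that the variable induces on the support. -/
lemma rvEntropy_congr {X : Ω → α} {Y : Ω → β}
    (h : ∀ ω ω', p ω ≠ 0 → p ω' ≠ 0 → (X ω = X ω' ↔ Y ω = Y ω')) :
    rvEntropy p X = rvEntropy p Y := by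
  classical
  rw [rvEntropy_eq_neg_sum_mul_log, rvEntropy_eq_neg_sum_mul_log]
  congr 1
  refine sum_congr rfl fun ω _ => ?_
  by_cases hω : p ω = 0
  · simp [hω]
  congr 2
  simp only [law, sum_filter]
  refine sum_congr rfl fun ω' _ => ?_
  by_cases hω' : p ω' = 0
  · simp [hω']
  · simp [h ω' ω hω' hω]

lemma rvEntropy_equiv {p' : Ω' → ℝ} (e : Ω ≃ Ω') (h : ∀ ω, p' (e ω) = p ω) (X : Ω' → α) :
    rvEntropy p (fun ω => X (e ω)) = rvEntropy p' X := by
  simp only [rvEntropy, law_equiv e h]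

lemma sum_mul_log_nonpos (hp : p ∈ stdSimplex ℝ Ω) {r : Ω → ℝ} (hr : ∀ ω, 0 < p ω → 0 < r ω)
    (hs : ∑ ω, p ω * r ω ≤ 1) : ∑ ω, p ω * log (r ω) ≤ 0 := by
  calc ∑ ω, p ω * log (r ω) ≤ ∑ ω, p ω * (r ω - 1) := by
        refine sum_le_sum fun ω _ => ?_
        rcases (hp.1 ω).eq_or_lt with h | h
        · simp [← h]
        · exact mul_le_mul_of_nonneg_left (log_le_sub_one_of_pos (hr ω h)) h.le
    _ = ∑ ω, p ω * r ω - 1 := by simp [mul_sub, hp.2]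
    _ ≤ 0 := by linarith

lemma rvEntropy_submodular (hp : p ∈ stdSimplex ℝ Ω) (X : Ω → α) (Y : Ω → β) (Z : Ω → γ) :
    rvEntropy p (fun ω => (X ω, Y ω, Z ω)) + rvEntropy p Z
      ≤ rvEntropy p (fun ω => (X ω, Z ω)) + rvEntropy p (fun ω => (Y ω, Z ω)) := by
  simp only [rvEntropy_eq_neg_sum_mul_log]
  have hT {ω} (h : 0 < p ω) := law_pos hp (fun ω => (X ω, Y ω, Z ω)) h
  have hZ {ω} (h : 0 < p ω) := law_pos hp Z h
  have hX {ω} (h : 0 < p ω) := law_pos hp (fun ω => (X ω, Z ω)) h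
  have hY {ω} (h : 0 < p ω) := law_pos hp (fun ω => (Y ω, Z ω)) h
  have key := sum_mul_log_nonpos hp
    (fun ω h => div_pos (mul_pos (hX h) (hY h)) (mul_pos (hT h) (hZ h)))
    (sum_mul_law_ratio_le_one hp X Y Z)
  have expand (ω) (h : p ω ≠ 0) := by
    have h := (hp.1 ω).lt_of_ne' h
    exact (log_div (mul_pos (hX h) (hY h)).ne' (mul_pos (hT h) (hZ h)).ne').trans
      (congrArg₂ (· - ·) (log_mul (hX h).ne' (hY h).ne') (log_mul (hT h).ne' (hZ h).ne'))
  rw [sum_congr rfl fun ω _ => mul_eq_mul_left_iff.mpr (or_iff_not_imp_right.mpr (expand ω))]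
    at key
  simp only [mul_sub, mul_add, sum_sub_distrib, sum_add_distrib] at key
  linarith

lemma rvEntropy_const (hp : p ∈ stdSimplex ℝ Ω) : rvEntropy p (fun _ => ()) = 0 := by
  have h := (law_mem_stdSimplex hp fun _ => ()).2
  simp only [univ_unique, sum_singleton] at h
  simp [rvEntropy, entropy, h]

lemma rvEntropy_pair_le (hp : p ∈ stdSimplex ℝ Ω) (X : Ω → α) (Y : Ω → β) :
    rvEntropy p (fun ω => (X ω, Y ω)) ≤ rvEntropy p X + rvEntropy p Y := by
  have h := rvEntropy_submodular hp X Y fun _ => ()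
  have hXY : rvEntropy p (fun ω => (X ω, Y ω, ())) = rvEntropy p (fun ω => (X ω, Y ω)) :=
    rvEntropy_congr (by simp)
  have hX : rvEntropy p (fun ω => (X ω, ())) = rvEntropy p X := rvEntropy_congr (by simp)
  have hY : rvEntropy p (fun ω => (Y ω, ())) = rvEntropy p Y := rvEntropy_congr (by simp)
  linarith [rvEntropy_const hp]

lemma entropy_le_log_card (hp : p ∈ stdSimplex ℝ Ω) {S : Finset Ω} (hS : ∀ a, p a ≠ 0 → a ∈ S) :
    entropy p ≤ log #S := by
  classical
  have hne : S.Nonempty := by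
    by_contra h
    have hzero (a) : p a = 0 := by_contra fun ha => h ⟨a, hS a ha⟩
    simpa [hzero] using hp.2
  have hcard : (0 : ℝ) < #S := by exact_mod_cast hne.card_pos
  have hmass : ∑ a, p a * (1 / (p a * #S)) ≤ 1 := by
    calc ∑ a, p a * (1 / (p a * #S)) ≤ ∑ a, if a ∈ S then 1 / (#S : ℝ) else 0 := by
          refine sum_le_sum fun a _ => ?_
          by_cases h : p a = 0
          · rw [h, zero_mul]
            positivity
          · rw [if_pos (hS a h)]
            exact le_of_eq (by field_simp)
      _ = 1 := by simp [hcard.ne']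
  have key := sum_mul_log_nonpos hp (fun a h => by positivity) hmass
  have expand (a) : p a * log (1 / (p a * #S)) = negMulLog (p a) - p a * log #S := by
    by_cases h : p a = 0
    · simp [h]
    · rw [one_div, log_inv, log_mul h hcard.ne', negMulLog]
      ring
  simp only [expand, sum_sub_distrib, ← sum_mul, hp.2, one_mul] at key
  exact sub_nonpos.mp key

end Entropy

section Product

variable {Ω Ω' α β : Type*}

/-- The product of two laws. -/
def prodLaw (p : Ω → ℝ) (q : Ω' → ℝ) (ω : Ω × Ω') : ℝ :=
  p ω.1 * q ω.2

variable [Fintype Ω] [Fintype Ω'] {p : Ω → ℝ} {q : Ω' → ℝ}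

lemma prodLaw_mem_stdSimplex (hp : p ∈ stdSimplex ℝ Ω) (hq : q ∈ stdSimplex ℝ Ω') :
    prodLaw p q ∈ stdSimplex ℝ (Ω × Ω') :=
  ⟨fun ω => mul_nonneg (hp.1 _) (hq.1 _), by
    simp [prodLaw, Fintype.sum_prod_type, ← mul_sum, hp.2, hq.2]⟩

lemma law_prodLaw_fst (hq : q ∈ stdSimplex ℝ Ω') (X : Ω → α) :
    law (prodLaw p q) (fun ω => X ω.1) = law p X := by
  classical
  funext a
  simp only [law, sum_filter, Fintype.sum_prod_type]
  refine sum_congr rfl fun ω _ => ?_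
  by_cases h : X ω = a <;> simp [prodLaw, h, ← mul_sum, hq.2]

lemma law_prodLaw_snd (hp : p ∈ stdSimplex ℝ Ω) (Y : Ω' → β) :
    law (prodLaw p q) (fun ω => Y ω.2) = law q Y := by
  classical
  funext b
  simp only [law, sum_filter, Fintype.sum_prod_type_right]
  refine sum_congr rfl fun ω _ => ?_
  by_cases h : Y ω = b <;> simp [prodLaw, h, ← sum_mul, hp.2]

lemma law_prodLaw_pair (X : Ω → α) (Y : Ω' → β) :
    law (prodLaw p q) (fun ω => (X ω.1, Y ω.2)) = prodLaw (law p X) (law q Y) := by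
  classical
  funext ⟨a, b⟩
  simp only [law, sum_filter, prodLaw, Fintype.sum_prod_type, sum_mul_sum]
  refine sum_congr rfl fun ω _ => sum_congr rfl fun ω' _ => ?_
  by_cases h : X ω = a <;> by_cases h' : Y ω' = b <;> simp [h, h']

lemma entropy_prodLaw (hp : p ∈ stdSimplex ℝ Ω) (hq : q ∈ stdSimplex ℝ Ω') :
    entropy (prodLaw p q) = entropy p + entropy q := by
  simp only [entropy, prodLaw, Fintype.sum_prod_type, negMulLog_mul, sum_add_distrib, ← mul_sum,
    ← sum_mul, hq.2, hp.2, one_mul]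

variable [Fintype α] [Fintype β]

lemma rvEntropy_prodLaw_fst (hq : q ∈ stdSimplex ℝ Ω') (X : Ω → α) :
    rvEntropy (prodLaw p q) (fun ω => X ω.1) = rvEntropy p X := by
  simp only [rvEntropy, law_prodLaw_fst hq]

lemma rvEntropy_prodLaw_pair (hp : p ∈ stdSimplex ℝ Ω) (hq : q ∈ stdSimplex ℝ Ω') (X : Ω → α)
    (Y : Ω' → β) :
    rvEntropy (prodLaw p q) (fun ω => (X ω.1, Y ω.2)) = rvEntropy p X + rvEntropy q Y := by
  rw [rvEntropy, law_prodLaw_pair,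
    entropy_prodLaw (law_mem_stdSimplex hp X) (law_mem_stdSimplex hq Y)]
  rfl

end Product

section Conditioning

variable {Ω α β ζ : Type*} [Fintype Ω] {p : Ω → ℝ}

/-- The conditional law of `X` given `Z = z`; it vanishes identically when `Z = z` is null. -/
noncomputable def condLaw (p : Ω → ℝ) (X : Ω → α) (Z : Ω → ζ) (z : ζ) (a : α) : ℝ :=
  law p (fun ω => (X ω, Z ω)) (a, z) / law p Z z

/-- The conditional entropy `H(X | Z) = H(X, Z) - H(Z)`. -/
noncomputable def condEntropy [Fintype α] [Fintype ζ] (p : Ω → ℝ) (X : Ω → α) (Z : Ω → ζ) : ℝ :=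
  rvEntropy p (fun ω => (X ω, Z ω)) - rvEntropy p Z

/-- Conditional independence of `A` and `B` given `Z`, with denominators cleared. -/
def CondIndep (p : Ω → ℝ) (A : Ω → α) (B : Ω → β) (Z : Ω → ζ) : Prop :=
  ∀ a b z, law p (fun ω => (A ω, B ω, Z ω)) (a, b, z) * law p Z z =
    law p (fun ω => (A ω, Z ω)) (a, z) * law p (fun ω => (B ω, Z ω)) (b, z)

lemma law_pair_le_left (hp : p ∈ stdSimplex ℝ Ω) (X : Ω → α) (Z : Ω → ζ) (a : α) (z : ζ) :
    law p (fun ω => (X ω, Z ω)) (a, z) ≤ law p X a := by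
  classical
  exact sum_le_sum_of_subset_of_nonneg
    (fun ω hω => by simp only [mem_filter, Prod.mk.injEq] at hω ⊢; exact ⟨hω.1, hω.2.1⟩)
    fun ω _ _ => hp.1 ω

lemma law_pair_le_right (hp : p ∈ stdSimplex ℝ Ω) (X : Ω → α) (Z : Ω → ζ) (a : α) (z : ζ) :
    law p (fun ω => (X ω, Z ω)) (a, z) ≤ law p Z z := by
  classical
  exact sum_le_sum_of_subset_of_nonneg
    (fun ω hω => by simp only [mem_filter, Prod.mk.injEq] at hω ⊢; exact ⟨hω.1, hω.2.2⟩)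
    fun ω _ _ => hp.1 ω

lemma law_ne_zero_of_condLaw_ne_zero (hp : p ∈ stdSimplex ℝ Ω) {X : Ω → α} {Z : Ω → ζ} {z : ζ}
    {a : α} (h : condLaw p X Z z a ≠ 0) : law p X a ≠ 0 := fun ha =>
  h (by rw [condLaw, le_antisymm (ha ▸ law_pair_le_left hp X Z a z) (law_nonneg hp _ _), zero_div])

lemma law_mul_condLaw (hp : p ∈ stdSimplex ℝ Ω) (X : Ω → α) (Z : Ω → ζ) (z : ζ) (a : α) :
    law p Z z * condLaw p X Z z a = law p (fun ω => (X ω, Z ω)) (a, z) := by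
  by_cases hz : law p Z z = 0
  · rw [hz, zero_mul, le_antisymm (hz ▸ law_pair_le_right hp X Z a z) (law_nonneg hp _ _)]
  · rw [condLaw, mul_div_cancel₀ _ hz]

variable [Fintype α]

lemma condLaw_mem_stdSimplex (hp : p ∈ stdSimplex ℝ Ω) (X : Ω → α) {Z : Ω → ζ} {z : ζ}
    (hz : law p Z z ≠ 0) : condLaw p X Z z ∈ stdSimplex ℝ α :=
  ⟨fun a => div_nonneg (law_nonneg hp _ _) (law_nonneg hp _ _), by
    simp only [condLaw, ← sum_div, sum_law_pair, div_self hz]⟩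

variable [Fintype ζ]

lemma sum_law_mul_entropy_condLaw (hp : p ∈ stdSimplex ℝ Ω) (X : Ω → α) (Z : Ω → ζ) :
    ∑ z, law p Z z * entropy (condLaw p X Z z) = condEntropy p X Z := by
  have hfibre (z : ζ) : ∑ a, negMulLog (law p (fun ω => (X ω, Z ω)) (a, z)) =
      negMulLog (law p Z z) + law p Z z * entropy (condLaw p X Z z) := by
    simp only [← law_mul_condLaw hp X Z z, negMulLog_mul, sum_add_distrib, ← sum_mul, ← mul_sum]
    by_cases hz : law p Z z = 0
    · simp [hz]
    · rw [(condLaw_mem_stdSimplex hp X hz).2, one_mul]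
      rfl
  rw [condEntropy, rvEntropy, rvEntropy, entropy, Fintype.sum_prod_type_right]
  simp only [hfibre, sum_add_distrib]
  exact (add_sub_cancel_left _ _).symm

lemma condEntropy_le (hp : p ∈ stdSimplex ℝ Ω) (X : Ω → α) (Z : Ω → ζ) :
    condEntropy p X Z ≤ rvEntropy p X :=
  sub_le_iff_le_add.mpr (rvEntropy_pair_le hp X Z)

end Conditioning

lemma exists_le_sum_mul {ι : Type*} [Fintype ι] {w : ι → ℝ} (hw : w ∈ stdSimplex ℝ ι)
    (f : ι → ℝ) : ∃ i, w i ≠ 0 ∧ f i ≤ ∑ j, w j * f j := by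
  by_contra! hlt
  obtain ⟨i, -, hi⟩ := exists_ne_zero_of_sum_ne_zero (hw.2.trans_ne one_ne_zero)
  have : ∑ i, w i * ∑ j, w j * f j < ∑ i, w i * f i := by
    refine sum_lt_sum (fun j _ => ?_) ⟨i, mem_univ i, ?_⟩
    · by_cases hj : w j = 0
      · simp [hj]
      · exact mul_le_mul_of_nonneg_left (hlt j hj).le (hw.1 j)
    · exact mul_lt_mul_of_pos_left (hlt i hi) ((hw.1 i).lt_of_ne' hi)
  rw [← sum_mul, hw.2, one_mul] at this
  exact this.false

section Convolution

variable {G Ω Ω' ζ : Type*} [AddCommGroup G] [Fintype G] [Fintype Ω] [Fintype Ω']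

/-- The convolution of two laws on `G`: the law of `a + b` for independent `a ∼ p`, `b ∼ q`. -/
noncomputable def conv (p q : G → ℝ) : G → ℝ :=
  law (prodLaw p q) fun ω => ω.1 + ω.2

lemma conv_mem_stdSimplex {p q : G → ℝ} (hp : p ∈ stdSimplex ℝ G) (hq : q ∈ stdSimplex ℝ G) :
    conv p q ∈ stdSimplex ℝ G :=
  law_mem_stdSimplex (prodLaw_mem_stdSimplex hp hq) _

lemma conv_apply (p q : G → ℝ) (g : G) : conv p q g = ∑ a, p a * q (g - a) := by
  classical
  simp only [conv, law, prodLaw, sum_filter, Fintype.sum_prod_type]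
  refine sum_congr rfl fun a _ => ?_
  simp only [← eq_sub_iff_add_eq', sum_ite_eq', mem_univ, if_true]

lemma conv_comm (p q : G → ℝ) : conv p q = conv q p := by
  rw [conv, conv, ← law_equiv (p := prodLaw q p) (p' := prodLaw p q) (Equiv.prodComm G G)
    fun ω => mul_comm _ _]
  simp only [Equiv.prodComm_apply, Prod.fst_swap, Prod.snd_swap, add_comm]

lemma conv_law_law (p : Ω → ℝ) (q : Ω' → ℝ) (X : Ω → G) (Y : Ω' → G) :
    conv (law p X) (law q Y) = law (prodLaw p q) (fun ω => X ω.1 + Y ω.2) := by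
  rw [conv, ← law_prodLaw_pair, law_law]

lemma conv_law_right (y : G → ℝ) (p : Ω → ℝ) (A : Ω → G) :
    conv y (law p A) = law (prodLaw y p) (fun ω => ω.1 + A ω.2) := by
  simpa only [law_id] using conv_law_law y p (fun g => g) A

lemma law_add_pair (p : Ω → ℝ) (A B : Ω → G) (Z : Ω → ζ) (g : G) (z : ζ) :
    law p (fun ω => (A ω + B ω, Z ω)) (g, z) =
      ∑ a, law p (fun ω => (A ω, B ω, Z ω)) (a, g - a, z) := by
  classical
  simp only [law, sum_filter]
  rw [sum_comm]
  refine sum_congr rfl fun ω _ => ?_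
  simp only [Prod.mk.injEq, ite_and, sum_ite_eq, mem_univ, if_true, eq_sub_iff_add_eq']

lemma conv_condLaw_condLaw {p : Ω → ℝ} {A B : Ω → G} {Z : Ω → ζ} (h : CondIndep p A B Z) {z : ζ}
    (hz : law p Z z ≠ 0) :
    conv (condLaw p A Z z) (condLaw p B Z z) = condLaw p (fun ω => A ω + B ω) Z z := by
  funext g
  simp only [conv_apply, condLaw]
  rw [law_add_pair, sum_div]
  refine sum_congr rfl fun a _ => ?_
  rw [div_mul_div_comm, ← h, mul_div_mul_right _ _ hz]

lemma conv_condLaw_right {y : G → ℝ} (hy : y ∈ stdSimplex ℝ G) (p : Ω → ℝ) (A : Ω → G)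
    (Z : Ω → ζ) (z : ζ) :
    conv y (condLaw p A Z z) =
      condLaw (prodLaw y p) (fun ω => ω.1 + A ω.2) (fun ω => Z ω.2) z := by
  funext g
  simp only [conv_apply, condLaw]
  rw [law_add_pair, sum_div, law_prodLaw_snd hy]
  refine sum_congr rfl fun a _ => ?_
  rw [law_prodLaw_pair (fun g => g) fun ω => (A ω, Z ω), prodLaw, law_id, mul_div_assoc]

lemma sum_law_mul_entropy_conv_condLaw_le [Fintype ζ] {p : Ω → ℝ} (hp : p ∈ stdSimplex ℝ Ω)
    {y : G → ℝ} (hy : y ∈ stdSimplex ℝ G) (A : Ω → G) (Z : Ω → ζ) :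
    ∑ z, law p Z z * entropy (conv y (condLaw p A Z z)) ≤ entropy (conv y (law p A)) := by
  have hyp := prodLaw_mem_stdSimplex hy hp
  simp only [conv_condLaw_right hy, conv_law_right]
  rw [← law_prodLaw_snd hy Z, sum_law_mul_entropy_condLaw hyp]
  exact condEntropy_le hyp _ _

end Convolution

section PairFunctional

variable {G Ω ζ : Type*} [AddCommGroup G] [Fintype G] [Fintype Ω] [Fintype ζ]

/-- The entropic functional of a pair of laws `a, b` on `G`, with reference laws `y₁, y₂`:
`c₀ H(a * b) + c₁ H(a) + c₂ H(b) + η (H(y₁ * a) + H(y₂ * b))`. -/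
noncomputable def pairFunctional (c₀ c₁ c₂ η : ℝ) (y₁ y₂ a b : G → ℝ) : ℝ :=
  c₀ * entropy (conv a b) + c₁ * entropy a + c₂ * entropy b +
    η * (entropy (conv y₁ a) + entropy (conv y₂ b))

lemma sum_law_mul_pairFunctional_le {p : Ω → ℝ} (hp : p ∈ stdSimplex ℝ Ω) {A B : Ω → G}
    {Z : Ω → ζ} (h : CondIndep p A B Z) {y₁ y₂ : G → ℝ} (hy₁ : y₁ ∈ stdSimplex ℝ G)
    (hy₂ : y₂ ∈ stdSimplex ℝ G) (c₀ c₁ c₂ : ℝ) {η : ℝ} (hη : 0 ≤ η) :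
    ∑ z, law p Z z * pairFunctional c₀ c₁ c₂ η y₁ y₂ (condLaw p A Z z) (condLaw p B Z z) ≤
      c₀ * condEntropy p (fun ω => A ω + B ω) Z + c₁ * condEntropy p A Z +
        c₂ * condEntropy p B Z +
        η * (entropy (conv y₁ (law p A)) + entropy (conv y₂ (law p B))) := by
  have hsum : ∑ z, law p Z z * entropy (conv (condLaw p A Z z) (condLaw p B Z z)) =
      condEntropy p (fun ω => A ω + B ω) Z := by
    rw [← sum_law_mul_entropy_condLaw hp]
    refine sum_congr rfl fun z _ => ?_
    by_cases hz : law p Z z = 0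
    · simp [hz]
    · rw [conv_condLaw_condLaw h hz]
  have h₁ := mul_le_mul_of_nonneg_left (sum_law_mul_entropy_conv_condLaw_le hp hy₁ A Z) hη
  have h₂ := mul_le_mul_of_nonneg_left (sum_law_mul_entropy_conv_condLaw_le hp hy₂ B Z) hη
  rw [← hsum, ← sum_law_mul_entropy_condLaw hp A, ← sum_law_mul_entropy_condLaw hp B]
  simp only [pairFunctional, mul_add, sum_add_distrib, mul_left_comm _ c₀, mul_left_comm _ c₁,
    mul_left_comm _ c₂, mul_left_comm _ η, ← mul_sum]
  linarith

lemma exists_fibre_pairFunctional_le {p : Ω → ℝ} (hp : p ∈ stdSimplex ℝ Ω) {A B : Ω → G}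
    {Z : Ω → ζ} (h : CondIndep p A B Z) {y₁ y₂ : G → ℝ} (hy₁ : y₁ ∈ stdSimplex ℝ G)
    (hy₂ : y₂ ∈ stdSimplex ℝ G) (c₀ c₁ c₂ : ℝ) {η : ℝ} (hη : 0 ≤ η) :
    ∃ a ∈ stdSimplex ℝ G, ∃ b ∈ stdSimplex ℝ G, (∀ g, a g ≠ 0 → law p A g ≠ 0) ∧
      pairFunctional c₀ c₁ c₂ η y₁ y₂ a b ≤
        c₀ * condEntropy p (fun ω => A ω + B ω) Z + c₁ * condEntropy p A Z +
          c₂ * condEntropy p B Z +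
          η * (entropy (conv y₁ (law p A)) + entropy (conv y₂ (law p B))) := by
  obtain ⟨z, hz, hle⟩ := exists_le_sum_mul (law_mem_stdSimplex hp Z) fun z =>
    pairFunctional c₀ c₁ c₂ η y₁ y₂ (condLaw p A Z z) (condLaw p B Z z)
  exact ⟨_, condLaw_mem_stdSimplex hp A hz, _, condLaw_mem_stdSimplex hp B hz,
    fun g => law_ne_zero_of_condLaw_ne_zero hp,
    hle.trans (sum_law_mul_pairFunctional_le hp h hy₁ hy₂ c₀ c₁ c₂ hη)⟩

end PairFunctional

section CondIndepCopy

variable {Ω α β ζ : Type*} [Fintype Ω] {p : Ω → ℝ}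

open scoped Classical in
/-- The law on `Ω × Ω` of two copies of `(Ω, p)` that share the value of `Z` and are conditionally
independent given it. -/
noncomputable def condIndepCopy (p : Ω → ℝ) (Z : Ω → ζ) (ω : Ω × Ω) : ℝ :=
  if Z ω.1 = Z ω.2 then p ω.1 * p ω.2 / law p Z (Z ω.1) else 0

lemma condIndepCopy_swap (p : Ω → ℝ) (Z : Ω → ζ) (ω ω' : Ω) :
    condIndepCopy p Z (ω, ω') = condIndepCopy p Z (ω', ω) := by
  by_cases h : Z ω = Z ω'
  · simp [condIndepCopy, h, mul_comm]
  · simp [condIndepCopy, h, Ne.symm h]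

lemma eq_of_condIndepCopy_ne_zero {Z : Ω → ζ} {ω : Ω × Ω} (h : condIndepCopy p Z ω ≠ 0) :
    Z ω.1 = Z ω.2 :=
  by_contra fun hne => h (if_neg hne)

lemma sum_condIndepCopy_right (hp : p ∈ stdSimplex ℝ Ω) (Z : Ω → ζ) (ω : Ω) :
    ∑ ω', condIndepCopy p Z (ω, ω') = p ω := by
  classical
  have hsum : ∑ ω', condIndepCopy p Z (ω, ω') = p ω * law p Z (Z ω) / law p Z (Z ω) := by
    simp only [condIndepCopy, ← sum_filter, ← sum_div, ← mul_sum, law, eq_comm (a := Z ω)]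
  rw [hsum]
  by_cases h : law p Z (Z ω) = 0
  · rw [h, div_zero, le_antisymm (h ▸ le_law hp Z ω) (hp.1 ω)]
  · exact mul_div_cancel_right₀ _ h

lemma condIndepCopy_mem_stdSimplex (hp : p ∈ stdSimplex ℝ Ω) (Z : Ω → ζ) :
    condIndepCopy p Z ∈ stdSimplex ℝ (Ω × Ω) := by
  refine ⟨fun ω => ?_, ?_⟩
  · unfold condIndepCopy
    split_ifs
    · exact div_nonneg (mul_nonneg (hp.1 _) (hp.1 _)) (law_nonneg hp _ _)
    · exact le_rfl
  · simp only [Fintype.sum_prod_type, sum_condIndepCopy_right hp, hp.2]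

lemma law_condIndepCopy_fst (hp : p ∈ stdSimplex ℝ Ω) (Z : Ω → ζ) (X : Ω → α) :
    law (condIndepCopy p Z) (fun ω => X ω.1) = law p X := by
  classical
  funext a
  simp only [law, sum_filter, Fintype.sum_prod_type]
  refine sum_congr rfl fun ω _ => ?_
  by_cases h : X ω = a <;> simp [h, sum_condIndepCopy_right hp]

lemma law_condIndepCopy_snd (hp : p ∈ stdSimplex ℝ Ω) (Z : Ω → ζ) (X : Ω → α) :
    law (condIndepCopy p Z) (fun ω => X ω.2) = law p X := by
  rw [← law_condIndepCopy_fst hp Z X, ← law_equiv (Equiv.prodComm Ω Ω)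
    fun ω => condIndepCopy_swap p Z ω.2 ω.1]
  rfl

lemma law_condIndepCopy_pair (p : Ω → ℝ) (Z : Ω → ζ) (X : Ω → α) (Y : Ω → β) (a : α) (b : β)
    (z : ζ) :
    law (condIndepCopy p Z) (fun ω => (X ω.1, Y ω.2, Z ω.1)) (a, b, z) =
      law p (fun ω => (X ω, Z ω)) (a, z) * law p (fun ω => (Y ω, Z ω)) (b, z) / law p Z z := by
  classical
  simp only [law, sum_filter, Fintype.sum_prod_type]
  rw [sum_mul_sum, sum_div]
  refine sum_congr rfl fun ω _ => ?_
  rw [sum_div]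
  refine sum_congr rfl fun ω' _ => ?_
  by_cases hX : X ω = a ∧ Z ω = z
  · obtain ⟨rfl, rfl⟩ := hX
    by_cases hY : Y ω' = b ∧ Z ω' = Z ω
    · simp [condIndepCopy, hY, law, sum_filter]
    · have hY' : Y ω' = b → Z ω ≠ Z ω' := fun h h' => hY ⟨h, h'.symm⟩
      simp +contextual [condIndepCopy, hY, hY']
  · rw [if_neg fun h => hX ⟨congrArg Prod.fst h, congrArg (fun t => t.2.2) h⟩,
      if_neg fun h => hX ⟨congrArg Prod.fst h, congrArg Prod.snd h⟩, zero_mul, zero_div]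

lemma rvEntropy_condIndepCopy_fst [Fintype α] (hp : p ∈ stdSimplex ℝ Ω) (Z : Ω → ζ) (X : Ω → α) :
    rvEntropy (condIndepCopy p Z) (fun ω => X ω.1) = rvEntropy p X := by
  rw [rvEntropy, law_condIndepCopy_fst hp, rvEntropy]

lemma rvEntropy_condIndepCopy_snd [Fintype α] (hp : p ∈ stdSimplex ℝ Ω) (Z : Ω → ζ) (X : Ω → α) :
    rvEntropy (condIndepCopy p Z) (fun ω => X ω.2) = rvEntropy p X := by
  rw [rvEntropy, law_condIndepCopy_snd hp, rvEntropy]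

lemma law_congr_of_support {X Y : Ω → α} (h : ∀ ω, p ω ≠ 0 → X ω = Y ω) : law p X = law p Y := by
  classical
  funext a
  simp only [law, sum_filter]
  refine sum_congr rfl fun ω _ => ?_
  by_cases hω : p ω = 0
  · simp [hω]
  · rw [h ω hω]

lemma condIndep_condIndepCopy (hp : p ∈ stdSimplex ℝ Ω) (Z : Ω → ζ) (X : Ω → α) (Y : Ω → β) :
    CondIndep (condIndepCopy p Z) (fun ω => X ω.1) (fun ω => Y ω.2) (fun ω => Z ω.1) := by
  intro a b z
  have hY : law (condIndepCopy p Z) (fun ω => (Y ω.2, Z ω.1)) = law p fun ω => (Y ω, Z ω) := by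
    rw [← law_condIndepCopy_snd hp Z fun ω => (Y ω, Z ω)]
    exact law_congr_of_support fun ω h => by rw [eq_of_condIndepCopy_ne_zero h]
  rw [law_condIndepCopy_pair, law_condIndepCopy_fst hp Z Z, hY,
    law_condIndepCopy_fst hp Z fun ω => (X ω, Z ω)]
  by_cases hz : law p Z z = 0
  · rw [hz, mul_zero, le_antisymm (hz ▸ law_pair_le_right hp X Z a z) (law_nonneg hp _ _),
      zero_mul]
  · exact div_mul_cancel₀ _ hz

lemma negMulLog_condIndepCopy (p : Ω → ℝ) (Z : Ω → ζ) (ω : Ω × Ω) :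
    negMulLog (condIndepCopy p Z ω) = condIndepCopy p Z ω * log (law p Z (Z ω.1)) -
      condIndepCopy p Z ω * log (p ω.1) - condIndepCopy p Z ω * log (p ω.2) := by
  by_cases h : condIndepCopy p Z ω = 0
  · simp [h]
  have hval : condIndepCopy p Z ω = p ω.1 * p ω.2 / law p Z (Z ω.1) :=
    if_pos (eq_of_condIndepCopy_ne_zero h)
  obtain ⟨hnum, hZ⟩ := div_ne_zero_iff.mp (hval ▸ h)
  obtain ⟨h₁, h₂⟩ := mul_ne_zero_iff.mp hnum
  have hlog : log (condIndepCopy p Z ω) = log (p ω.1) + log (p ω.2) - log (law p Z (Z ω.1)) := by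
    rw [hval, log_div hnum hZ, log_mul h₁ h₂]
  rw [negMulLog, hlog]
  ring

lemma entropy_condIndepCopy [Fintype ζ] (hp : p ∈ stdSimplex ℝ Ω) (Z : Ω → ζ) :
    entropy (condIndepCopy p Z) = 2 * entropy p - rvEntropy p Z := by
  have hfst (g : Ω → ℝ) : ∑ ω, condIndepCopy p Z ω * g ω.1 = ∑ ω, p ω * g ω := by
    rw [← sum_law_mul (condIndepCopy p Z) Prod.fst, law_condIndepCopy_fst hp Z fun ω => ω, law_id]
  have hsnd (g : Ω → ℝ) : ∑ ω, condIndepCopy p Z ω * g ω.2 = ∑ ω, p ω * g ω := by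
    rw [← sum_law_mul (condIndepCopy p Z) Prod.snd, law_condIndepCopy_snd hp Z fun ω => ω, law_id]
  rw [entropy]
  simp only [negMulLog_condIndepCopy, sum_sub_distrib]
  rw [hfst fun ω => log (law p Z (Z ω)), hfst fun ω => log (p ω), hsnd fun ω => log (p ω),
    rvEntropy_eq_neg_sum_mul_log]
  simp only [entropy, negMulLog, neg_mul, sum_neg_distrib]
  ring

end CondIndepCopy

section BalogSzemerediGowers

variable {G Ω σ : Type*} [AddCommGroup G] [Module (ZMod 2) G]

lemma add_eq_add_of_add_eq_add {x y x' y' : G} (h : x + y = x' + y') : x + y' = x' + y := by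
  rw [← sub_eq_zero, ZModModule.sub_eq_add] at h ⊢
  rw [← h]
  abel

variable [Fintype G] [Fintype Ω] [Fintype σ] {p : Ω → ℝ}

/-- The triple `(X₁, Y₁, X₁ + Y₂)` determines both copies, while `X₁ + Y₂ = X₂ + Y₁` in
characteristic two; submodularity over `T = (X₁ + Y₂, S)` therefore bounds `H(T)`. -/
lemma rvEntropy_crossSum_le (hp : p ∈ stdSimplex ℝ Ω) {X Y : Ω → G} {S : Ω → σ}
    (hinj : Function.Injective fun ω => (X ω, Y ω, S ω)) :
    rvEntropy (condIndepCopy p fun ω => (X ω + Y ω, S ω)) (fun ω => (X ω.1 + Y ω.2, S ω.1)) ≤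
      rvEntropy p (fun ω => (X ω + Y ω, S ω)) + 2 * rvEntropy p (fun ω => (X ω, S ω)) +
        2 * rvEntropy p (fun ω => (Y ω, S ω)) - 2 * rvEntropy p S - 2 * entropy p := by
  set Z : Ω → G × σ := fun ω => (X ω + Y ω, S ω)
  set W := condIndepCopy p Z
  have hW : W ∈ stdSimplex ℝ (Ω × Ω) := condIndepCopy_mem_stdSimplex hp Z
  have hadd {ω} (h : W ω ≠ 0) : X ω.1 + Y ω.1 = X ω.2 + Y ω.2 :=
    congrArg Prod.fst (eq_of_condIndepCopy_ne_zero h)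
  have hS {ω} (h : W ω ≠ 0) : S ω.1 = S ω.2 := congrArg Prod.snd (eq_of_condIndepCopy_ne_zero h)
  have hdet : rvEntropy W (fun ω => (X ω.1, Y ω.1, X ω.1 + Y ω.2, S ω.1)) = entropy W := by
    rw [← rvEntropy_id W]
    refine rvEntropy_congr fun ω ω' h h' => ⟨fun heq => ?_, fun heq => by rw [heq]⟩
    simp only [Prod.mk.injEq] at heq
    obtain ⟨hX, hY, hXY, hS₁⟩ := heq
    have hY₂ : Y ω.2 = Y ω'.2 := by rwa [hX, add_right_inj] at hXY
    have hX₂ : X ω.2 = X ω'.2 := by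
      rw [← add_left_inj (Y ω.2), ← hadd h, hX, hY, hadd h', hY₂]
    exact Prod.ext (hinj (by simp only [hX, hY, hS₁]))
      (hinj (by simp only [hX₂, hY₂, ← hS h, ← hS h', hS₁]))
  have hleft : rvEntropy W (fun ω => (X ω.1, X ω.1 + Y ω.2, S ω.1)) =
      rvEntropy W (fun ω => (X ω.1, Y ω.2, S ω.1)) :=
    rvEntropy_congr fun ω ω' _ _ => by simp +contextual [Prod.mk.injEq]
  have hright : rvEntropy W (fun ω => (Y ω.1, X ω.1 + Y ω.2, S ω.1)) =
      rvEntropy W (fun ω => (Y ω.1, X ω.2, S ω.1)) :=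
    rvEntropy_congr fun ω ω' h h' => by
      simp +contextual [add_eq_add_of_add_eq_add (hadd h), add_eq_add_of_add_eq_add (hadd h')]
  have hX₂ : rvEntropy W (fun ω => (X ω.2, S ω.1)) = rvEntropy p (fun ω => (X ω, S ω)) :=
    (rvEntropy_congr fun ω ω' h h' => by rw [hS h, hS h']).trans
      (rvEntropy_condIndepCopy_snd hp Z fun ω => (X ω, S ω))
  have hY₂ : rvEntropy W (fun ω => (Y ω.2, S ω.1)) = rvEntropy p (fun ω => (Y ω, S ω)) :=
    (rvEntropy_congr fun ω ω' h h' => by rw [hS h, hS h']).trans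
      (rvEntropy_condIndepCopy_snd hp Z fun ω => (Y ω, S ω))
  have hX₁ := rvEntropy_condIndepCopy_fst hp Z fun ω => (X ω, S ω)
  have hY₁ := rvEntropy_condIndepCopy_fst hp Z fun ω => (Y ω, S ω)
  have hS₁ := rvEntropy_condIndepCopy_fst hp Z S
  have hsub := rvEntropy_submodular hW (fun ω => X ω.1) (fun ω => Y ω.1)
    fun ω => (X ω.1 + Y ω.2, S ω.1)
  have hsubX := rvEntropy_submodular hW (fun ω => X ω.1) (fun ω => Y ω.2) fun ω => S ω.1
  have hsubY := rvEntropy_submodular hW (fun ω => Y ω.1) (fun ω => X ω.2) fun ω => S ω.1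
  have hent := entropy_condIndepCopy hp Z
  linarith

lemma condEntropy_crossSum_le (hp : p ∈ stdSimplex ℝ Ω) {X Y : Ω → G} {S : Ω → σ}
    (hinj : Function.Injective fun ω => (X ω, Y ω, S ω)) :
    condEntropy (condIndepCopy p fun ω => (X ω + Y ω, S ω)) (fun ω => X ω.1 + Y ω.2)
        (fun ω => (X ω.1 + Y ω.1, S ω.1)) ≤
      rvEntropy p (fun ω => (X ω + Y ω, S ω)) + 2 * rvEntropy p (fun ω => (X ω, S ω)) +
        2 * rvEntropy p (fun ω => (Y ω, S ω)) - 3 * rvEntropy p S - 2 * entropy p := by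
  set Z : Ω → G × σ := fun ω => (X ω + Y ω, S ω)
  set W := condIndepCopy p Z
  have hsub := rvEntropy_submodular (condIndepCopy_mem_stdSimplex hp Z)
    (fun ω => X ω.1 + Y ω.2) (fun ω => X ω.1 + Y ω.1) fun ω => S ω.1
  have hS := rvEntropy_condIndepCopy_fst hp Z S
  have hcross := rvEntropy_crossSum_le hp hinj
  rw [condEntropy]
  linarith

/-- Entropic Balog–Szemerédi–Gowers: the laws `a, b` are fibres of `X₁` and `Y₂` over the common
value of `(X + Y, S)`, where `X₁, X₂` and `Y₁, Y₂` come from conditionally independent copies. -/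
lemma exists_pairFunctional_le_of_injective (hp : p ∈ stdSimplex ℝ Ω) {X Y : Ω → G} {S : Ω → σ}
    (hinj : Function.Injective fun ω => (X ω, Y ω, S ω)) {y₁ y₂ : G → ℝ}
    (hy₁ : y₁ ∈ stdSimplex ℝ G) (hy₂ : y₂ ∈ stdSimplex ℝ G) {c₀ : ℝ} (hc₀ : 0 ≤ c₀) (c₁ c₂ : ℝ)
    {η : ℝ} (hη : 0 ≤ η) :
    ∃ a ∈ stdSimplex ℝ G, ∃ b ∈ stdSimplex ℝ G, (∀ g, a g ≠ 0 → law p X g ≠ 0) ∧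
      pairFunctional c₀ c₁ c₂ η y₁ y₂ a b ≤
        c₀ * (rvEntropy p (fun ω => (X ω + Y ω, S ω)) + 2 * rvEntropy p (fun ω => (X ω, S ω)) +
          2 * rvEntropy p (fun ω => (Y ω, S ω)) - 3 * rvEntropy p S - 2 * entropy p) +
        (c₁ + c₂) * (entropy p - rvEntropy p (fun ω => (X ω + Y ω, S ω))) +
        η * (entropy (conv y₁ (law p X)) + entropy (conv y₂ (law p Y))) := by
  set Z : Ω → G × σ := fun ω => (X ω + Y ω, S ω)
  set W := condIndepCopy p Z
  obtain ⟨a, ha, b, hb, hsupp, hle⟩ := exists_fibre_pairFunctional_le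
    (condIndepCopy_mem_stdSimplex hp Z) (condIndep_condIndepCopy hp Z X Y) hy₁ hy₂ c₀ c₁ c₂ hη
  rw [law_condIndepCopy_fst hp, law_condIndepCopy_snd hp] at hle
  refine ⟨a, ha, b, hb, fun g hg => law_condIndepCopy_fst hp Z X ▸ hsupp g hg, hle.trans ?_⟩
  have hZ := rvEntropy_condIndepCopy_fst hp Z Z
  have hX : condEntropy W (fun ω => X ω.1) (fun ω => Z ω.1) = entropy p - rvEntropy p Z := by
    rw [condEntropy, hZ, rvEntropy_condIndepCopy_fst hp Z fun ω => (X ω, Z ω), ← rvEntropy_id p]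
    congr 1
    exact rvEntropy_congr fun ω ω' _ _ => by simp +contextual [Z, ← hinj.eq_iff]
  have hY : condEntropy W (fun ω => Y ω.2) (fun ω => Z ω.1) = entropy p - rvEntropy p Z := by
    have hcopy : rvEntropy W (fun ω => (Y ω.2, Z ω.1)) = rvEntropy p (fun ω => (Y ω, Z ω)) :=
      (rvEntropy_congr fun ω ω' h h' => by
        rw [eq_of_condIndepCopy_ne_zero h, eq_of_condIndepCopy_ne_zero h']).trans
        (rvEntropy_condIndepCopy_snd hp Z fun ω => (Y ω, Z ω))
    rw [condEntropy, hZ, hcopy, ← rvEntropy_id p]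
    congr 1
    refine rvEntropy_congr fun ω ω' _ _ => ⟨fun h => hinj ?_, fun h => by rw [h]⟩
    simp only [Z, Prod.mk.injEq] at h ⊢
    exact ⟨by simpa [h.1] using h.2.1, h.1, h.2.2⟩
  have hcross := mul_le_mul_of_nonneg_left (condEntropy_crossSum_le hp hinj) hc₀
  rw [hX, hY]
  linarith

end BalogSzemerediGowers

/-! ### Polynomial Freiman–Ruzsa -/

section KaimanovichVershik

variable {G : Type*} [AddCommGroup G] [Fintype G] {x y z : G → ℝ}

lemma rvEntropy_fst_add (hx : x ∈ stdSimplex ℝ G) (hy : y ∈ stdSimplex ℝ G) :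
    rvEntropy (prodLaw x y) (fun ω => (ω.1, ω.1 + ω.2)) = entropy x + entropy y := by
  rw [← entropy_prodLaw hx hy, ← rvEntropy_id (prodLaw x y)]
  exact rvEntropy_congr fun ω ω' _ _ => by simp +contextual [Prod.ext_iff]

lemma entropy_le_entropy_conv_right (hx : x ∈ stdSimplex ℝ G) (hy : y ∈ stdSimplex ℝ G) :
    entropy y ≤ entropy (conv x y) := by
  have hsub := rvEntropy_pair_le (prodLaw_mem_stdSimplex hx hy) (fun ω => ω.1)
    fun ω => ω.1 + ω.2
  have hfst := rvEntropy_prodLaw_fst (p := x) hy fun g => g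
  rw [rvEntropy_fst_add hx hy, hfst, rvEntropy_id] at hsub
  exact le_of_add_le_add_left hsub

lemma entropy_le_entropy_conv_left (hx : x ∈ stdSimplex ℝ G) (hy : y ∈ stdSimplex ℝ G) :
    entropy x ≤ entropy (conv x y) :=
  conv_comm y x ▸ entropy_le_entropy_conv_right hy hx

lemma rvEntropy_snd_sum (hy : y ∈ stdSimplex ℝ G) (hx : x ∈ stdSimplex ℝ G)
    (hz : z ∈ stdSimplex ℝ G) :
    rvEntropy (prodLaw y (prodLaw x z)) (fun ω => (ω.2.2, ω.1 + (ω.2.1 + ω.2.2))) =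
      entropy (conv y x) + entropy z := by
  have hcongr : rvEntropy (prodLaw y (prodLaw x z)) (fun ω => (ω.2.2, ω.1 + (ω.2.1 + ω.2.2))) =
      rvEntropy (prodLaw y (prodLaw x z)) (fun ω => (ω.1 + ω.2.1, ω.2.2)) :=
    rvEntropy_congr fun ω ω' _ _ => by
      simp +contextual [Prod.mk.injEq, ← add_assoc, and_comm (a := ω.2.2 = _)]
  have hassoc := rvEntropy_equiv (p := prodLaw y (prodLaw x z)) (p' := prodLaw (prodLaw y x) z)
    (Equiv.prodAssoc G G G).symm (fun ω => mul_assoc _ _ _) fun ω => (ω.1.1 + ω.1.2, ω.2)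
  have hpair := rvEntropy_prodLaw_pair (prodLaw_mem_stdSimplex hy hx) hz (fun ω => ω.1 + ω.2)
    fun g => g
  rw [rvEntropy_id] at hpair
  exact hcongr.trans (hassoc.trans hpair)

/-- The Kaimanovich–Vershik inequality. -/
lemma entropy_conv_conv_add_le (hy : y ∈ stdSimplex ℝ G) (hx : x ∈ stdSimplex ℝ G)
    (hz : z ∈ stdSimplex ℝ G) :
    entropy (conv y (conv x z)) + entropy x ≤ entropy (conv y x) + entropy (conv x z) := by
  have hxz := prodLaw_mem_stdSimplex hx hz
  have hsub := rvEntropy_submodular (prodLaw_mem_stdSimplex hy hxz) (fun ω => ω.1)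
    (fun ω => ω.2.2) fun ω => ω.1 + (ω.2.1 + ω.2.2)
  have htriple : rvEntropy (prodLaw y (prodLaw x z))
      (fun ω => (ω.1, ω.2.2, ω.1 + (ω.2.1 + ω.2.2))) = entropy y + (entropy x + entropy z) := by
    rw [← entropy_prodLaw hx hz, ← entropy_prodLaw hy hxz, ← rvEntropy_id (prodLaw y _)]
    exact rvEntropy_congr fun ω ω' _ _ => by
      simp +contextual [Prod.ext_iff, and_comm (a := ω.2.2 = _)]
  have hsum : rvEntropy (prodLaw y (prodLaw x z)) (fun ω => ω.1 + (ω.2.1 + ω.2.2)) =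
      entropy (conv y (conv x z)) := by
    rw [conv.eq_1 x z, conv_law_right, rvEntropy]
  have hfst : rvEntropy (prodLaw y (prodLaw x z)) (fun ω => (ω.1, ω.1 + (ω.2.1 + ω.2.2))) =
      entropy y + entropy (conv x z) := by
    have hpair := rvEntropy_prodLaw_pair hy hxz (fun g => g) fun ω => ω.1 + ω.2
    rw [rvEntropy_id] at hpair
    exact (rvEntropy_congr fun ω ω' _ _ => by simp +contextual).trans hpair
  rw [htriple, hsum, hfst, rvEntropy_snd_sum hy hx hz] at hsub
  linarith

end KaimanovichVershik

section CondIndepProduct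

variable {Ω Ω' α β ζ ζ' : Type*} [Fintype Ω] [Fintype Ω']

lemma law_apply_eq_of_iff (p : Ω → ℝ) {X : Ω → α} {Y : Ω → β} {a : α} {b : β}
    (h : ∀ ω, X ω = a ↔ Y ω = b) : law p X a = law p Y b := by
  classical
  simp only [law, sum_filter, h]

lemma condIndep_prodLaw (p : Ω → ℝ) (q : Ω' → ℝ) (X : Ω → α) (Z : Ω → ζ) (Y : Ω' → β)
    (W : Ω' → ζ') :
    CondIndep (prodLaw p q) (fun ω => X ω.1) (fun ω => Y ω.2) (fun ω => (Z ω.1, W ω.2)) := by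
  rintro a b ⟨z, w⟩
  have hXYZW : law (prodLaw p q) (fun ω => (X ω.1, Y ω.2, Z ω.1, W ω.2)) (a, b, z, w) =
      law p (fun ω => (X ω, Z ω)) (a, z) * law q (fun ω => (Y ω, W ω)) (b, w) :=
    (law_apply_eq_of_iff _ fun ω => by simp only [Prod.mk.injEq]; tauto).trans
      (congrFun (law_prodLaw_pair (fun ω => (X ω, Z ω)) fun ω => (Y ω, W ω)) ((a, z), (b, w)))
  have hXZW : law (prodLaw p q) (fun ω => (X ω.1, Z ω.1, W ω.2)) (a, z, w) =
      law p (fun ω => (X ω, Z ω)) (a, z) * law q W w :=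
    (law_apply_eq_of_iff _ fun ω => by simp only [Prod.mk.injEq]; tauto).trans
      (congrFun (law_prodLaw_pair (fun ω => (X ω, Z ω)) W) ((a, z), w))
  have hYZW : law (prodLaw p q) (fun ω => (Y ω.2, Z ω.1, W ω.2)) (b, z, w) =
      law p Z z * law q (fun ω => (Y ω, W ω)) (b, w) :=
    (law_apply_eq_of_iff _ fun ω => by simp only [Prod.mk.injEq]; tauto).trans
      (congrFun (law_prodLaw_pair Z fun ω => (Y ω, W ω)) (z, (b, w)))
  rw [hXYZW, hXZW, hYZW, law_prodLaw_pair, prodLaw]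
  ring

end CondIndepProduct

section Minimiser

variable {G : Type*} [AddCommGroup G] [Fintype G]

/-- The functional `τ` of the entropic proof of PFR with `η = 1/20`, that is,
`d(a, b) + η d(y₁, a) + η d(y₂, b)` for the entropic Ruzsa distance
`d(a, b) = H(a * b) - H(a) / 2 - H(b) / 2`, up to the constant `η (H(y₁) + H(y₂)) / 2`. -/
noncomputable def tauFunctional (y₁ y₂ a b : G → ℝ) : ℝ :=
  pairFunctional 1 (-21 / 40) (-21 / 40) (1 / 20) y₁ y₂ a b

lemma continuous_entropy {α : Type*} [Fintype α] : Continuous fun p : α → ℝ => entropy p :=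
  continuous_finsetSum _ fun a _ => continuous_negMulLog.comp (continuous_apply a)

lemma continuous_conv : Continuous fun w : (G → ℝ) × (G → ℝ) => conv w.1 w.2 := by
  refine continuous_pi fun g => ?_
  simp only [conv_apply]
  fun_prop

lemma continuous_pairFunctional (c₀ c₁ c₂ η : ℝ) (y₁ y₂ : G → ℝ) :
    Continuous fun w : (G → ℝ) × (G → ℝ) => pairFunctional c₀ c₁ c₂ η y₁ y₂ w.1 w.2 := by
  have hent := continuous_entropy (α := G)
  have hconv := continuous_conv (G := G)
  have h₀ := hent.comp hconv
  have h₁ : Continuous fun w : (G → ℝ) × (G → ℝ) => entropy (conv y₁ w.1) :=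
    hent.comp (hconv.comp (continuous_const.prodMk continuous_fst))
  have h₂ : Continuous fun w : (G → ℝ) × (G → ℝ) => entropy (conv y₂ w.2) :=
    hent.comp (hconv.comp (continuous_const.prodMk continuous_snd))
  have h₃ : Continuous fun w : (G → ℝ) × (G → ℝ) => entropy w.1 := hent.comp continuous_fst
  have h₄ : Continuous fun w : (G → ℝ) × (G → ℝ) => entropy w.2 := hent.comp continuous_snd
  exact (((h₀.const_mul c₀).add (h₃.const_mul c₁)).add (h₄.const_mul c₂)).add
    ((h₁.add h₂).const_mul η)

lemma exists_isMinOn_pairFunctional (c₀ c₁ c₂ η : ℝ) (y₁ y₂ : G → ℝ) :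
    ∃ x₁ ∈ stdSimplex ℝ G, ∃ x₂ ∈ stdSimplex ℝ G, ∀ a ∈ stdSimplex ℝ G, ∀ b ∈ stdSimplex ℝ G,
      pairFunctional c₀ c₁ c₂ η y₁ y₂ x₁ x₂ ≤ pairFunctional c₀ c₁ c₂ η y₁ y₂ a b := by
  classical
  have hne : (stdSimplex ℝ G ×ˢ stdSimplex ℝ G).Nonempty :=
    ⟨(Pi.single 0 1, Pi.single 0 1), single_mem_stdSimplex ℝ 0, single_mem_stdSimplex ℝ 0⟩
  obtain ⟨⟨x₁, x₂⟩, ⟨h₁, h₂⟩, hmin⟩ :=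
    ((isCompact_stdSimplex ℝ G).prod (isCompact_stdSimplex ℝ G)).exists_isMinOn hne
      (continuous_pairFunctional c₀ c₁ c₂ η y₁ y₂).continuousOn
  exact ⟨x₁, h₁, x₂, h₂, fun a ha b hb => hmin (a := (a, b)) ⟨ha, hb⟩⟩

end Minimiser

section Quadruple

variable {G : Type*} {x₁ x₂ : G → ℝ}

/-- The law on `(G × G) × (G × G)` of independent `((a, d), (b, c))` with `a, c ∼ x₁` and
`b, d ∼ x₂`. -/
def quadLaw (x₁ x₂ : G → ℝ) : (G × G) × (G × G) → ℝ :=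
  prodLaw (prodLaw x₁ x₂) (prodLaw x₂ x₁)

lemma quadLaw_swap_inner (x₁ x₂ : G → ℝ) (ω : (G × G) × (G × G)) :
    quadLaw x₁ x₂ (Equiv.prodProdProdComm G G G G ω) = quadLaw x₁ x₂ ω := by
  simp only [quadLaw, prodLaw, Equiv.prodProdProdComm_apply]
  ring

/-- The rearrangement `((a, d), (b, c)) ↦ ((a, c), (b, d))`, which groups the variables of
`quadLaw` by their law. -/
def groupByLaw : (G × G) × (G × G) ≃ (G × G) × (G × G) where
  toFun ω := ((ω.1.1, ω.2.2), (ω.2.1, ω.1.2))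
  invFun ω := ((ω.1.1, ω.2.2), (ω.2.1, ω.1.2))
  left_inv _ := rfl
  right_inv _ := rfl

lemma prodLaw_groupByLaw (x₁ x₂ : G → ℝ) (ω : (G × G) × (G × G)) :
    prodLaw (prodLaw x₁ x₁) (prodLaw x₂ x₂) (groupByLaw ω) = quadLaw x₁ x₂ ω := by
  simp only [quadLaw, prodLaw, groupByLaw, Equiv.coe_fn_mk]
  ring

lemma quadLaw_mem_stdSimplex [Fintype G] (hx₁ : x₁ ∈ stdSimplex ℝ G)
    (hx₂ : x₂ ∈ stdSimplex ℝ G) :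
    quadLaw x₁ x₂ ∈ stdSimplex ℝ ((G × G) × (G × G)) :=
  prodLaw_mem_stdSimplex (prodLaw_mem_stdSimplex hx₁ hx₂) (prodLaw_mem_stdSimplex hx₂ hx₁)

end Quadruple

section Endgame

variable {G : Type*} [AddCommGroup G] {x₁ x₂ y₁ y₂ : G → ℝ}

/-- The triple `(a + b, b + c, a + b + c + d)` of the endgame of the entropic proof of PFR, as a
function of `((a, d), (b, c))`. -/
def endgameTriple (ω : (G × G) × (G × G)) : G × G × G :=
  (ω.1.1 + ω.2.1, ω.2.1 + ω.2.2, ω.1.1 + ω.1.2 + (ω.2.1 + ω.2.2))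

/-- The law of the endgame triple of `x₁, x₂`. -/
noncomputable def endgameLaw [Fintype G] (x₁ x₂ : G → ℝ) : G × G × G → ℝ :=
  law (quadLaw x₁ x₂) endgameTriple

variable [Fintype G]

lemma endgameLaw_mem_stdSimplex (hx₁ : x₁ ∈ stdSimplex ℝ G) (hx₂ : x₂ ∈ stdSimplex ℝ G) :
    endgameLaw x₁ x₂ ∈ stdSimplex ℝ (G × G × G) :=
  law_mem_stdSimplex (quadLaw_mem_stdSimplex hx₁ hx₂) _

lemma law_endgameLaw_fst (hx₁ : x₁ ∈ stdSimplex ℝ G) (hx₂ : x₂ ∈ stdSimplex ℝ G) :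
    law (endgameLaw x₁ x₂) (fun t => t.1) = conv x₁ x₂ := by
  rw [endgameLaw, law_law]
  exact (law_equiv (Equiv.prodProdProdComm G G G G) (quadLaw_swap_inner x₁ x₂)
    fun ω => ω.1.1 + ω.1.2).trans
      (law_prodLaw_fst (prodLaw_mem_stdSimplex hx₂ hx₁) fun ω : G × G => ω.1 + ω.2)

lemma law_endgameLaw_snd (hx₁ : x₁ ∈ stdSimplex ℝ G) (hx₂ : x₂ ∈ stdSimplex ℝ G) :
    law (endgameLaw x₁ x₂) (fun t => t.2.1) = conv x₂ x₁ := by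
  rw [endgameLaw, law_law]
  exact law_prodLaw_snd (prodLaw_mem_stdSimplex hx₁ hx₂) fun ω : G × G => ω.1 + ω.2

lemma law_endgameLaw_sum (x₁ x₂ : G → ℝ) :
    law (endgameLaw x₁ x₂) (fun t => t.2.2) = conv (conv x₁ x₂) (conv x₂ x₁) := by
  rw [endgameLaw, law_law]
  exact (conv_law_law (prodLaw x₁ x₂) (prodLaw x₂ x₁) (fun ω => ω.1 + ω.2)
    fun ω => ω.1 + ω.2).symm

lemma conv_conv_conv_comm (x₁ x₂ : G → ℝ) :
    conv (conv x₁ x₁) (conv x₂ x₂) = conv (conv x₁ x₂) (conv x₂ x₁) := by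
  have hgroup := law_equiv groupByLaw (prodLaw_groupByLaw x₁ x₂)
    fun ω => ω.1.1 + ω.1.2 + (ω.2.1 + ω.2.2)
  rw [conv.eq_1 x₁, conv.eq_1 x₂, conv.eq_1 x₁, conv.eq_1 x₂, conv_law_law, conv_law_law,
    ← hgroup, quadLaw]
  congr 1
  funext ω
  simp only [groupByLaw, Equiv.coe_fn_mk]
  abel

lemma rvEntropy_quadLaw_sums (hx₁ : x₁ ∈ stdSimplex ℝ G) (hx₂ : x₂ ∈ stdSimplex ℝ G) :
    rvEntropy (quadLaw x₁ x₂) (fun ω => (ω.1.1 + ω.1.2, ω.2.1 + ω.2.2)) =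
      2 * entropy (conv x₁ x₂) := by
  have hpair := rvEntropy_prodLaw_pair (prodLaw_mem_stdSimplex hx₁ hx₂)
    (prodLaw_mem_stdSimplex hx₂ hx₁) (fun ω => ω.1 + ω.2) fun ω => ω.1 + ω.2
  refine hpair.trans ?_
  rw [two_mul]
  exact congrArg (entropy (conv x₁ x₂) + ·) (by rw [← conv_comm x₂ x₁, rvEntropy, conv])

lemma rvEntropy_endgameLaw_snd_sum (hx₁ : x₁ ∈ stdSimplex ℝ G) (hx₂ : x₂ ∈ stdSimplex ℝ G) :
    rvEntropy (endgameLaw x₁ x₂) (fun t => (t.2.1, t.2.2)) = 2 * entropy (conv x₁ x₂) := by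
  rw [endgameLaw, rvEntropy_law, ← rvEntropy_quadLaw_sums hx₁ hx₂]
  exact rvEntropy_congr fun ω ω' _ _ => by
    simp +contextual [endgameTriple, and_comm (a := ω.1.1 + ω.1.2 = _)]

lemma rvEntropy_endgameLaw_fst_sum (hx₁ : x₁ ∈ stdSimplex ℝ G) (hx₂ : x₂ ∈ stdSimplex ℝ G) :
    rvEntropy (endgameLaw x₁ x₂) (fun t => (t.1, t.2.2)) = 2 * entropy (conv x₁ x₂) := by
  rw [endgameLaw, rvEntropy_law, ← rvEntropy_quadLaw_sums hx₁ hx₂,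
    ← rvEntropy_equiv (Equiv.prodProdProdComm G G G G) (quadLaw_swap_inner x₁ x₂)]
  have hsum (ω : (G × G) × (G × G)) :
      ω.1.1 + ω.2.1 + (ω.1.2 + ω.2.2) = ω.1.1 + ω.1.2 + (ω.2.1 + ω.2.2) :=
    add_add_add_comm _ _ _ _
  exact rvEntropy_congr fun ω ω' _ _ => by simp +contextual [endgameTriple, hsum]

lemma rvEntropy_endgameLaw_fst_add_snd [Module (ZMod 2) G] (hx₁ : x₁ ∈ stdSimplex ℝ G)
    (hx₂ : x₂ ∈ stdSimplex ℝ G) :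
    rvEntropy (endgameLaw x₁ x₂) (fun t => (t.1 + t.2.1, t.2.2)) =
      entropy (conv x₁ x₁) + entropy (conv x₂ x₂) := by
  have hpair := rvEntropy_prodLaw_pair (prodLaw_mem_stdSimplex hx₁ hx₁)
    (prodLaw_mem_stdSimplex hx₂ hx₂) (fun ω => ω.1 + ω.2) fun ω => ω.1 + ω.2
  refine Eq.trans ?_ hpair
  rw [endgameLaw, rvEntropy_law, ← rvEntropy_equiv groupByLaw (prodLaw_groupByLaw x₁ x₂)]
  have hUV (ω : (G × G) × (G × G)) : ω.1.1 + ω.2.1 + (ω.2.1 + ω.2.2) = ω.1.1 + ω.2.2 := by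
    rw [add_assoc, ← add_assoc ω.2.1, ZModModule.add_self, zero_add]
  have hS (ω : (G × G) × (G × G)) :
      ω.1.1 + ω.1.2 + (ω.2.1 + ω.2.2) = ω.1.1 + ω.2.2 + (ω.2.1 + ω.1.2) := by abel
  exact rvEntropy_congr fun ω ω' _ _ => by
    simp +contextual [endgameTriple, groupByLaw, hUV, hS]

lemma entropy_sum_add_entropy_endgameLaw_le (hx₁ : x₁ ∈ stdSimplex ℝ G)
    (hx₂ : x₂ ∈ stdSimplex ℝ G) :
    entropy (conv (conv x₁ x₂) (conv x₂ x₁)) + entropy (endgameLaw x₁ x₂) ≤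
      4 * entropy (conv x₁ x₂) := by
  have hsub := rvEntropy_submodular (endgameLaw_mem_stdSimplex hx₁ hx₂) (fun t => t.1)
    (fun t => t.2.1) fun t => t.2.2
  rw [rvEntropy_endgameLaw_fst_sum hx₁ hx₂, rvEntropy_endgameLaw_snd_sum hx₁ hx₂,
    rvEntropy_id (endgameLaw x₁ x₂), rvEntropy, law_endgameLaw_sum] at hsub
  linarith

lemma tauFunctional_conv_conv_le (hx₁ : x₁ ∈ stdSimplex ℝ G) (hx₂ : x₂ ∈ stdSimplex ℝ G)
    (hy₁ : y₁ ∈ stdSimplex ℝ G) (hy₂ : y₂ ∈ stdSimplex ℝ G) :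
    tauFunctional y₁ y₂ (conv x₁ x₂) (conv x₂ x₁) ≤
      entropy (conv (conv x₁ x₂) (conv x₂ x₁)) - 21 / 20 * entropy (conv x₁ x₂) +
        1 / 20 * (entropy (conv y₁ x₁) + entropy (conv y₂ x₂) + 2 * entropy (conv x₁ x₂) -
          entropy x₁ - entropy x₂) := by
  have h₁ := entropy_conv_conv_add_le hy₁ hx₁ hx₂
  have h₂ := entropy_conv_conv_add_le hy₂ hx₂ hx₁
  rw [tauFunctional, pairFunctional]
  rw [conv_comm x₂ x₁] at h₂ ⊢
  linarith

lemma tauFunctional_conv_self_le (hx₁ : x₁ ∈ stdSimplex ℝ G) (hx₂ : x₂ ∈ stdSimplex ℝ G)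
    (hy₁ : y₁ ∈ stdSimplex ℝ G) (hy₂ : y₂ ∈ stdSimplex ℝ G) :
    tauFunctional y₁ y₂ (conv x₁ x₁) (conv x₂ x₂) ≤
      entropy (conv (conv x₁ x₂) (conv x₂ x₁)) -
        21 / 40 * (entropy (conv x₁ x₁) + entropy (conv x₂ x₂)) +
        1 / 20 * (entropy (conv y₁ x₁) + entropy (conv y₂ x₂) + entropy (conv x₁ x₁) +
          entropy (conv x₂ x₂) - entropy x₁ - entropy x₂) := by
  have h₁ := entropy_conv_conv_add_le hy₁ hx₁ hx₁
  have h₂ := entropy_conv_conv_add_le hy₂ hx₂ hx₂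
  rw [tauFunctional, pairFunctional, conv_conv_conv_comm]
  linarith

lemma rvEntropy_quadLaw_fst (hx₁ : x₁ ∈ stdSimplex ℝ G) (hx₂ : x₂ ∈ stdSimplex ℝ G) :
    rvEntropy (quadLaw x₁ x₂) (fun ω => (ω.1.1, ω.1.1 + ω.1.2, ω.2.1 + ω.2.2)) =
      entropy x₁ + entropy x₂ + entropy (conv x₁ x₂) := by
  have hpair := rvEntropy_prodLaw_pair (prodLaw_mem_stdSimplex hx₁ hx₂)
    (prodLaw_mem_stdSimplex hx₂ hx₁) (fun ω => (ω.1, ω.1 + ω.2)) fun ω => ω.1 + ω.2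
  rw [rvEntropy_fst_add hx₁ hx₂] at hpair
  rw [conv_comm x₁ x₂]
  exact (rvEntropy_congr fun ω ω' _ _ => by simp [and_assoc]).trans hpair

lemma rvEntropy_quadLaw_snd (hx₁ : x₁ ∈ stdSimplex ℝ G) (hx₂ : x₂ ∈ stdSimplex ℝ G) :
    rvEntropy (quadLaw x₁ x₂) (fun ω => (ω.2.1, ω.1.1 + ω.1.2, ω.2.1 + ω.2.2)) =
      entropy x₁ + entropy x₂ + entropy (conv x₁ x₂) := by
  have hpair := rvEntropy_prodLaw_pair (prodLaw_mem_stdSimplex hx₁ hx₂)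
    (prodLaw_mem_stdSimplex hx₂ hx₁) (fun ω => ω.1 + ω.2) fun ω => (ω.1, ω.1 + ω.2)
  rw [rvEntropy_fst_add hx₂ hx₁] at hpair
  rw [add_comm (entropy x₁), add_comm]
  exact (rvEntropy_congr fun ω ω' _ _ => by
    simp only [Prod.mk.injEq]; exact and_left_comm).trans hpair

lemma rvEntropy_quadLaw_fst_add_snd (x₁ x₂ : G → ℝ) :
    rvEntropy (quadLaw x₁ x₂) (fun ω => (ω.1.1 + ω.2.1, ω.1.1 + ω.1.2, ω.2.1 + ω.2.2)) =
      entropy (endgameLaw x₁ x₂) := by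
  rw [endgameLaw, ← rvEntropy]
  exact rvEntropy_congr fun ω ω' _ _ => by
    simp +contextual [endgameTriple, and_comm (a := ω.1.1 + ω.1.2 = _)]

/-- The competitors are the fibres of `a` and `b` over the value of `(a + d, b + c)`. -/
lemma exists_tauFunctional_le_fibre (hx₁ : x₁ ∈ stdSimplex ℝ G) (hx₂ : x₂ ∈ stdSimplex ℝ G)
    (hy₁ : y₁ ∈ stdSimplex ℝ G) (hy₂ : y₂ ∈ stdSimplex ℝ G) :
    ∃ a ∈ stdSimplex ℝ G, ∃ b ∈ stdSimplex ℝ G, tauFunctional y₁ y₂ a b ≤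
      entropy (endgameLaw x₁ x₂) - 2 * entropy (conv x₁ x₂) -
        21 / 20 * (entropy x₁ + entropy x₂ - entropy (conv x₁ x₂)) +
        1 / 20 * (entropy (conv y₁ x₁) + entropy (conv y₂ x₂)) := by
  have h₁₂ := prodLaw_mem_stdSimplex hx₁ hx₂
  have h₂₁ := prodLaw_mem_stdSimplex hx₂ hx₁
  obtain ⟨a, ha, b, hb, -, hle⟩ := exists_fibre_pairFunctional_le
    (quadLaw_mem_stdSimplex hx₁ hx₂) (A := fun ω => ω.1.1) (B := fun ω => ω.2.1)
    (condIndep_prodLaw _ _ Prod.fst (fun ω => ω.1 + ω.2) Prod.fst fun ω => ω.1 + ω.2) hy₁ hy₂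
    1 (-21 / 40) (-21 / 40) (η := 1 / 20) (by norm_num)
  have hfst : law (quadLaw x₁ x₂) (fun ω => ω.1.1) = x₁ :=
    (law_prodLaw_fst h₂₁ fun ω : G × G => ω.1).trans
      ((law_prodLaw_fst hx₂ fun g => g).trans (law_id x₁))
  have hsnd : law (quadLaw x₁ x₂) (fun ω => ω.2.1) = x₂ :=
    (law_prodLaw_snd h₁₂ fun ω : G × G => ω.1).trans
      ((law_prodLaw_fst hx₁ fun g => g).trans (law_id x₂))
  refine ⟨a, ha, b, hb, hle.trans ?_⟩
  rw [condEntropy, condEntropy, condEntropy, rvEntropy_quadLaw_fst_add_snd,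
    rvEntropy_quadLaw_fst hx₁ hx₂, rvEntropy_quadLaw_snd hx₁ hx₂, rvEntropy_quadLaw_sums hx₁ hx₂,
    hfst, hsnd]
  linarith

variable [Module (ZMod 2) G]

lemma exists_tauFunctional_le_endgame (hx₁ : x₁ ∈ stdSimplex ℝ G) (hx₂ : x₂ ∈ stdSimplex ℝ G)
    (hy₁ : y₁ ∈ stdSimplex ℝ G) (hy₂ : y₂ ∈ stdSimplex ℝ G) :
    ∃ a ∈ stdSimplex ℝ G, ∃ b ∈ stdSimplex ℝ G, tauFunctional y₁ y₂ a b ≤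
      entropy (conv x₁ x₁) + entropy (conv x₂ x₂) + 8 * entropy (conv x₁ x₂) -
        3 * entropy (conv (conv x₁ x₂) (conv x₂ x₁)) - 2 * entropy (endgameLaw x₁ x₂) -
        21 / 20 * (entropy (endgameLaw x₁ x₂) - entropy (conv x₁ x₁) - entropy (conv x₂ x₂)) +
        1 / 20 * (entropy (conv y₁ x₁) + entropy (conv y₂ x₂) + 2 * entropy (conv x₁ x₂) -
          entropy x₁ - entropy x₂) := by
  obtain ⟨a, ha, b, hb, -, hle⟩ := exists_pairFunctional_le_of_injective
    (endgameLaw_mem_stdSimplex hx₁ hx₂) (X := fun t => t.1) (Y := fun t => t.2.1)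
    (S := fun t => t.2.2) Function.injective_id hy₁ hy₂ zero_le_one (-21 / 40) (-21 / 40)
    (η := 1 / 20) (by norm_num)
  refine ⟨a, ha, b, hb, hle.trans ?_⟩
  have h₁ := entropy_conv_conv_add_le hy₁ hx₁ hx₂
  have h₂ := entropy_conv_conv_add_le hy₂ hx₂ hx₁
  rw [conv_comm x₂ x₁] at h₂
  rw [rvEntropy_endgameLaw_fst_add_snd hx₁ hx₂, rvEntropy_endgameLaw_fst_sum hx₁ hx₂,
    rvEntropy_endgameLaw_snd_sum hx₁ hx₂, rvEntropy, law_endgameLaw_sum,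
    law_endgameLaw_fst hx₁ hx₂, law_endgameLaw_snd hx₁ hx₂, conv_comm x₂ x₁]
  linarith

/-- A minimiser of `τ` has vanishing entropic Ruzsa distance: otherwise one of the four competing
pairs above would have a smaller value. -/
lemma entropy_conv_le_of_tauFunctional_min (hx₁ : x₁ ∈ stdSimplex ℝ G)
    (hx₂ : x₂ ∈ stdSimplex ℝ G) (hy₁ : y₁ ∈ stdSimplex ℝ G) (hy₂ : y₂ ∈ stdSimplex ℝ G)
    (hmin : ∀ a ∈ stdSimplex ℝ G, ∀ b ∈ stdSimplex ℝ G,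
      tauFunctional y₁ y₂ x₁ x₂ ≤ tauFunctional y₁ y₂ a b) :
    entropy (conv x₁ x₂) ≤ entropy x₁ / 2 + entropy x₂ / 2 := by
  have hsub := entropy_sum_add_entropy_endgameLaw_le hx₁ hx₂
  have h₁ := (hmin _ (conv_mem_stdSimplex hx₁ hx₂) _ (conv_mem_stdSimplex hx₂ hx₁)).trans
    (tauFunctional_conv_conv_le hx₁ hx₂ hy₁ hy₂)
  have h₂ := (hmin _ (conv_mem_stdSimplex hx₁ hx₁) _ (conv_mem_stdSimplex hx₂ hx₂)).trans
    (tauFunctional_conv_self_le hx₁ hx₂ hy₁ hy₂)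
  obtain ⟨a, ha, b, hb, hab⟩ := exists_tauFunctional_le_fibre hx₁ hx₂ hy₁ hy₂
  have h₃ := (hmin a ha b hb).trans hab
  obtain ⟨a', ha', b', hb', hab'⟩ := exists_tauFunctional_le_endgame hx₁ hx₂ hy₁ hy₂
  have h₄ := (hmin a' ha' b' hb').trans hab'
  rw [tauFunctional, pairFunctional] at h₁ h₂ h₃ h₄
  linarith

end Endgame

section UniformLaw

variable {α : Type*} {S : Finset α}

open scoped Classical in
/-- The uniform law on a finite set. -/
noncomputable def uniformLaw (S : Finset α) (a : α) : ℝ :=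
  if a ∈ S then (#S : ℝ)⁻¹ else 0

lemma mem_of_uniformLaw_ne_zero {a : α} (h : uniformLaw S a ≠ 0) : a ∈ S :=
  by_contra fun ha => h (if_neg ha)

variable [Fintype α]

lemma uniformLaw_mem_stdSimplex (hS : S.Nonempty) : uniformLaw S ∈ stdSimplex ℝ α := by
  refine ⟨fun a => ?_, ?_⟩
  · unfold uniformLaw
    split_ifs <;> positivity
  · simp [uniformLaw, hS.card_ne_zero]

open scoped Classical in
lemma entropy_uniformLaw (S : Finset α) : entropy (uniformLaw S) = log #S := by
  rcases S.eq_empty_or_nonempty with rfl | hS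
  · simp [entropy, uniformLaw]
  · have hcard : (#S : ℝ) ≠ 0 := Nat.cast_ne_zero.mpr hS.card_ne_zero
    have happly (a : α) :
        negMulLog (uniformLaw S a) = if a ∈ S then (#S : ℝ)⁻¹ * log #S else 0 := by
      unfold uniformLaw
      split_ifs <;> simp [negMulLog]
    simp_rw [entropy, happly, sum_ite_mem, univ_inter, sum_const, nsmul_eq_mul]
    exact mul_inv_cancel_left₀ hcard _

open scoped Classical in
lemma eq_uniformLaw {p : α → ℝ} (hp : p ∈ stdSimplex ℝ α) {c : ℝ}
    (h : ∀ a, p a = if a ∈ S then c else 0) : p = uniformLaw S := by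
  have hsum : (#S : ℝ) * c = 1 := by simpa [h] using hp.2
  funext a
  rw [h, uniformLaw, eq_inv_of_mul_eq_one_right hsum]

end UniformLaw

section FibreEntropy

variable {Ω α ζ : Type*} [Fintype Ω] {p : Ω → ℝ}

lemma rvEntropy_le_log_card [Fintype α] (hp : p ∈ stdSimplex ℝ Ω) {X : Ω → α} {T : Finset α}
    (hT : ∀ ω, p ω ≠ 0 → X ω ∈ T) : rvEntropy p X ≤ log #T :=
  entropy_le_log_card (law_mem_stdSimplex hp X) fun a ha => by
    obtain ⟨ω, hω, rfl⟩ := exists_of_law_ne_zero ha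
    exact hT ω hω

open scoped Classical in
lemma exists_entropy_sub_rvEntropy_le_log_card [Fintype ζ] (hp : p ∈ stdSimplex ℝ Ω)
    (Z : Ω → ζ) {S : Finset Ω} (hS : ∀ ω, p ω ≠ 0 → ω ∈ S) :
    ∃ ω ∈ S, entropy p - rvEntropy p Z ≤ log #{ω' ∈ S | Z ω' = Z ω} := by
  obtain ⟨z, hz, hle⟩ := exists_le_sum_mul (law_mem_stdSimplex hp Z)
    fun z => -entropy (condLaw p (fun ω => ω) Z z)
  obtain ⟨ω, hω, rfl⟩ := exists_of_law_ne_zero hz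
  have hpair : rvEntropy p (fun ω => (ω, Z ω)) = entropy p :=
    (rvEntropy_congr fun ω ω' _ _ => by simp +contextual).trans (rvEntropy_id p)
  simp only [mul_neg, sum_neg_distrib, sum_law_mul_entropy_condLaw hp, condEntropy, hpair,
    neg_le_neg_iff] at hle
  refine ⟨ω, hS ω hω, hle.trans (entropy_le_log_card (condLaw_mem_stdSimplex hp _ hz) ?_)⟩
  intro ω' hω'
  have hjoint : law p (fun ω => (ω, Z ω)) (ω', Z ω) ≠ 0 := fun h =>
    hω' (by rw [condLaw, h, zero_div])
  obtain ⟨ω'', hne, heq⟩ := exists_of_law_ne_zero hjoint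
  obtain ⟨rfl, hZ⟩ := Prod.mk.inj heq
  exact mem_filter.mpr ⟨hS _ hne, hZ⟩

end FibreEntropy

section Coset

variable {G : Type*} [AddCommGroup G]

/-- The subgroup of periods of a function on `G`. -/
def periodSubgroup {α : Type*} (f : G → α) : AddSubgroup G where
  carrier := {h | ∀ g, f (g + h) = f g}
  zero_mem' g := by rw [add_zero]
  add_mem' ha hb g := by rw [← add_assoc, hb, ha]
  neg_mem' ha g := by rw [← ha (g + -_), neg_add_cancel_right]

lemma sub_mem_periodSubgroup {α : Type*} {q r : G → α} {u v : G} (hu : ∀ g, q (g - u) = r g)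
    (hv : ∀ g, q (g - v) = r g) : u - v ∈ periodSubgroup q := fun g => by
  rw [← add_sub_assoc, hv, ← hu, add_sub_cancel_right]

variable [Fintype G] {p q : G → ℝ}

/-- This is the equality case of Jensen's inequality for `negMulLog`. -/
lemma apply_sub_eq_conv_of_entropy_conv_eq (hp : p ∈ stdSimplex ℝ G) (hq : q ∈ stdSimplex ℝ G)
    (h : entropy (conv p q) = entropy q) {a : G} (ha : p a ≠ 0) (g : G) :
    q (g - a) = conv p q g := by
  have hjensen (g : G) : ∑ a, p a • negMulLog (q (g - a)) ≤ negMulLog (∑ a, p a • q (g - a)) :=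
    concaveOn_negMulLog.le_map_sum (fun a _ => hp.1 a) hp.2 fun a _ => hq.1 _
  have htranslate (a : G) : ∑ g, negMulLog (q (g - a)) = entropy q :=
    (Equiv.subRight a).sum_comp fun g => negMulLog (q g)
  have hsum : ∑ g, ∑ a, p a • negMulLog (q (g - a)) =
      ∑ g, negMulLog (∑ a, p a • q (g - a)) := by
    rw [sum_comm]
    simp only [smul_eq_mul, ← mul_sum, htranslate, ← sum_mul, hp.2, one_mul, ← conv_apply]
    exact h.symm
  have heq := (sum_eq_sum_iff_of_le fun g _ => hjensen g).mp hsum g (mem_univ g)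
  rw [(strictConcaveOn_negMulLog.map_sum_eq_iff' (fun a _ => hp.1 a) hp.2 fun a _ => hq.1 _).mp
    heq.symm a (mem_univ a) ha, conv_apply]
  simp only [smul_eq_mul]

open scoped Classical in
lemma exists_eq_uniformLaw_coset (hp : p ∈ stdSimplex ℝ G) (hq : q ∈ stdSimplex ℝ G)
    (h : entropy (conv p q) ≤ entropy p / 2 + entropy q / 2) :
    ∃ (H : AddSubgroup G) (w : G), p = uniformLaw ({g | g - w ∈ H} : Finset G) := by
  have hpconv := entropy_le_entropy_conv_left hp hq
  have hqconv := entropy_le_entropy_conv_right hp hq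
  have hqt {u} (hu : p u ≠ 0) (g : G) : q (g - u) = conv p q g :=
    apply_sub_eq_conv_of_entropy_conv_eq hp hq (by linarith) hu g
  have hpt {v} (hv : q v ≠ 0) (g : G) : p (g - v) = conv p q g := by
    rw [conv_comm p q]
    exact apply_sub_eq_conv_of_entropy_conv_eq hq hp (by rw [conv_comm]; linarith) hv g
  obtain ⟨w, -, hw⟩ := exists_ne_zero_of_sum_ne_zero (hp.2.trans_ne one_ne_zero)
  obtain ⟨z, -, hz⟩ := exists_ne_zero_of_sum_ne_zero (hq.2.trans_ne one_ne_zero)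
  have hsupp {g} (hg : p g ≠ 0) : g - w ∈ periodSubgroup p := by
    have hperiod : q (z + (g - w)) = q z := sub_mem_periodSubgroup (hqt hg) (hqt hw) z
    have hsub := sub_mem_periodSubgroup (hpt (hperiod ▸ hz)) (hpt hz)
    rwa [add_sub_cancel_left] at hsub
  refine ⟨periodSubgroup p, w, eq_uniformLaw hp (c := p w) fun g => ?_⟩
  split_ifs with hg
  · rw [← (mem_filter.mp hg).2 w, add_sub_cancel]
  · by_contra hne
    exact hg (by simpa using hsupp hne)

open scoped Classical in
lemma card_coset (H : AddSubgroup G) (w : G) : #{g : G | g - w ∈ H} = Nat.card H := by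
  rw [Nat.card_eq_fintype_card, ← Fintype.card_subtype]
  exact Fintype.card_congr ((Equiv.subRight w).subtypeEquiv fun _ => Iff.rfl)

lemma entropy_add_rvEntropy_le_entropy_conv {G' : Type*} [AddCommGroup G'] [Fintype G']
    (hp : p ∈ stdSimplex ℝ G) (hq : q ∈ stdSimplex ℝ G) (φ : G →+ G') {c : G'}
    (hc : ∀ g, q g ≠ 0 → φ g = c) : entropy q + rvEntropy p φ ≤ entropy (conv p q) := by
  have hsub := rvEntropy_submodular (prodLaw_mem_stdSimplex hp hq) (fun ω => ω.1)
    (fun ω => ω.1 + ω.2) fun ω => φ ω.1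
  have hφ {ω : G × G} (h : prodLaw p q ω ≠ 0) : φ ω.1 = φ (ω.1 + ω.2) - c := by
    rw [map_add, hc _ (right_ne_zero_of_mul h), add_sub_cancel_right]
  have hall : rvEntropy (prodLaw p q) (fun ω => (ω.1, ω.1 + ω.2, φ ω.1)) =
      entropy p + entropy q :=
    (rvEntropy_congr fun ω ω' _ _ => by simp +contextual).trans (rvEntropy_fst_add hp hq)
  have hfst : rvEntropy (prodLaw p q) (fun ω => (ω.1, φ ω.1)) = entropy p :=
    (rvEntropy_congr fun ω ω' _ _ => by simp +contextual).trans
      ((rvEntropy_prodLaw_fst hq fun g => g).trans (rvEntropy_id p))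
  have hsum : rvEntropy (prodLaw p q) (fun ω => (ω.1 + ω.2, φ ω.1)) = entropy (conv p q) :=
    rvEntropy_congr fun ω ω' h h' => by
      simp only [Prod.mk.injEq, hφ h, hφ h', and_iff_left_iff_imp]
      exact fun hω => by rw [hω]
  rw [hall, hfst, hsum, rvEntropy_prodLaw_fst hq φ] at hsub
  linarith

open scoped Classical in
lemma exists_entropy_le_log_card_inter_coset (hp : p ∈ stdSimplex ℝ G) (hq : q ∈ stdSimplex ℝ G)
    {S : Finset G} (hS : ∀ g, p g ≠ 0 → g ∈ S) {H : AddSubgroup G} {w : G}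
    (hH : ∀ g, q g ≠ 0 → g - w ∈ H) :
    ∃ z ∈ S, entropy q + entropy p - entropy (conv p q) ≤ log #{x ∈ S | x - z ∈ H} := by
  have : Fintype (G ⧸ H) := Fintype.ofFinite _
  have hconv := entropy_add_rvEntropy_le_entropy_conv hp hq (QuotientAddGroup.mk' H) (c := w)
    fun g hg => (QuotientAddGroup.eq_iff_sub_mem.mpr (hH g hg))
  obtain ⟨z, hz, hle⟩ := exists_entropy_sub_rvEntropy_le_log_card hp (QuotientAddGroup.mk' H) hS
  refine ⟨z, hz, ?_⟩
  simp only [QuotientAddGroup.mk'_apply, QuotientAddGroup.eq_iff_sub_mem] at hle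
  linarith

end Coset

section PFR

variable {G : Type*} [AddCommGroup G] [Module (ZMod 2) G]

open scoped Classical in
/-- Entropic form of polynomial Freiman–Ruzsa in characteristic two: the coset comes from the
minimiser of `τ` with reference laws `a, b`, compared with the competitor `(b, a)`. -/
lemma exists_coset_entropy_le [Fintype G] {a b : G → ℝ} (ha : a ∈ stdSimplex ℝ G)
    (hb : b ∈ stdSimplex ℝ G) {S : Finset G} (hS : ∀ g, a g ≠ 0 → g ∈ S) :
    ∃ (H : AddSubgroup G), ∃ z ∈ S,
      23 * entropy a + 22 * entropy b - 44 * entropy (conv a b) ≤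
        2 * log #{x ∈ S | x - z ∈ H} - log (Nat.card H) := by
  obtain ⟨x₁, hx₁, x₂, hx₂, hmin⟩ :=
    exists_isMinOn_pairFunctional 1 (-21 / 40) (-21 / 40) (1 / 20) a b
  have hdist := entropy_conv_le_of_tauFunctional_min hx₁ hx₂ ha hb hmin
  obtain ⟨H, w, hH⟩ := exists_eq_uniformLaw_coset hx₁ hx₂ hdist
  have hcard : entropy x₁ = log (Nat.card H) := by rw [hH, entropy_uniformLaw, card_coset]
  have hsupp (g) (hg : x₁ g ≠ 0) : g - w ∈ H := by
    rw [hH] at hg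
    exact (mem_filter.mp (mem_of_uniformLaw_ne_zero hg)).2
  obtain ⟨z, hz, hle⟩ := exists_entropy_le_log_card_inter_coset ha hx₁ hS hsupp
  refine ⟨H, z, hz, ?_⟩
  have hba := hmin b hb a ha
  rw [pairFunctional, pairFunctional, conv_comm b a] at hba
  have h₁ := entropy_le_entropy_conv_left hx₁ hx₂
  have h₂ := entropy_le_entropy_conv_right hx₁ hx₂
  have h₃ := entropy_le_entropy_conv_left hb hx₂
  have h₄ := entropy_le_entropy_conv_right hb hx₂
  rw [← hcard]
  linarith

open scoped Classical in
/-- Polynomial Freiman–Ruzsa with Balog–Szemerédi–Gowers built in, for the sums along a set `P` of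
pairs, in logarithmic form. -/
lemma exists_coset_log_card_le [Finite G] {S S' : Finset G} {P : Finset (G × G)} (hP : P.Nonempty)
    (hPS : ∀ w ∈ P, w.1 ∈ S ∧ w.2 ∈ S ∧ w.1 + w.2 ∈ S') :
    ∃ (H : AddSubgroup G), ∃ z ∈ S, 133 * log #P + log (Nat.card H) ≤
      2 * log #{x ∈ S | x - z ∈ H} + 89 * log #S' + 176 * log #S := by
  cases nonempty_fintype G
  have hu := uniformLaw_mem_stdSimplex hP
  have hsupp {w : G × G} (hw : uniformLaw P w ≠ 0) := hPS w (mem_of_uniformLaw_ne_zero hw)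
  have hinj : Function.Injective fun w : G × G => (w.1, w.2, ()) := fun w w' h => by
    simpa [Prod.ext_iff] using h
  have hlaw := law_mem_stdSimplex hu Prod.fst
  obtain ⟨a, ha, b, hb, hsub, hle⟩ := exists_pairFunctional_le_of_injective hu hinj hlaw hlaw
    (c₀ := 44) (by norm_num) (-23) (-22) le_rfl
  obtain ⟨H, z, hz, hcoset⟩ := exists_coset_entropy_le ha hb (S := S) fun g hg => by
    obtain ⟨w, hw, rfl⟩ := exists_of_law_ne_zero (hsub g hg)
    exact (hsupp hw).1
  refine ⟨H, z, hz, ?_⟩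
  have hunit (X : G × G → G) : rvEntropy (uniformLaw P) (fun w => (X w, ())) =
      rvEntropy (uniformLaw P) X := rvEntropy_congr fun w w' _ _ => by simp
  rw [hunit, hunit, hunit, entropy_uniformLaw, rvEntropy_const hu, pairFunctional] at hle
  have hS' := rvEntropy_le_log_card hu fun w hw => (hsupp hw).2.2
  have hS₁ := rvEntropy_le_log_card hu fun w hw => (hsupp hw).1
  have hS₂ := rvEntropy_le_log_card hu fun w hw => (hsupp hw).2.1
  linarith

open scoped Classical in
lemma exists_coset_card_le [Finite G] {S S' : Finset G} {P : Finset (G × G)} (hP : P.Nonempty)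
    (hPS : ∀ w ∈ P, w.1 ∈ S ∧ w.2 ∈ S ∧ w.1 + w.2 ∈ S') :
    ∃ (H : AddSubgroup G) (z : G), (#P : ℝ) ^ 133 * Nat.card H ≤
      (#{x ∈ S | x - z ∈ H} : ℝ) ^ 2 * (#S' : ℝ) ^ 89 * (#S : ℝ) ^ 176 := by
  obtain ⟨H, z, hz, hle⟩ := exists_coset_log_card_le hP hPS
  refine ⟨H, z, ?_⟩
  obtain ⟨w, hw⟩ := id hP
  have hH₀ : (0 : ℝ) < Nat.card H := Nat.cast_pos.mpr Nat.card_pos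
  have hS₀ : (0 : ℝ) < #S := Nat.cast_pos.mpr (card_pos.mpr ⟨z, hz⟩)
  have hS'₀ : (0 : ℝ) < #S' := Nat.cast_pos.mpr (card_pos.mpr ⟨_, (hPS w hw).2.2⟩)
  have hz₀ : (0 : ℝ) < #{x ∈ S | x - z ∈ H} :=
    Nat.cast_pos.mpr (card_pos.mpr ⟨z, by simp [hz, H.zero_mem]⟩)
  rw [← log_le_log_iff (by positivity) (by positivity), log_mul (by positivity) (by positivity),
    log_mul (by positivity) (by positivity), log_mul (by positivity) (by positivity)]
  simpa only [log_pow, Nat.cast_ofNat] using hle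

end PFR

end EntropicPFR

/-! ### Weyl operators -/

section SignChar

/-- The nontrivial character `a ↦ (-1) ^ a` of `𝔽₂`. -/
noncomputable def signChar : AddChar (ZMod 2) ℝ :=
  AddChar.zmodChar 2 (neg_one_sq (R := ℝ))

lemma signChar_apply (a : ZMod 2) : signChar a = (-1) ^ a.val := rfl

lemma signChar_eq_neg_one {a : ZMod 2} (ha : a ≠ 0) : signChar a = -1 := by
  have hone : a = 1 := Fin.eq_one_of_ne_zero a ha
  rw [hone, signChar_apply, ZMod.val_one, pow_one]

lemma signChar_eq_one_iff {a : ZMod 2} : signChar a = 1 ↔ a = 0 := by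
  refine ⟨fun h => by_contra fun ha => ?_, fun h => by rw [h, AddChar.map_zero_eq_one]⟩
  rw [signChar_eq_neg_one ha] at h
  norm_num at h

lemma signChar_mul_self (a : ZMod 2) : signChar a * signChar a = 1 := by
  rw [← AddChar.map_add_eq_mul, CharTwo.add_self_eq_zero, AddChar.map_zero_eq_one]

lemma signChar_le_one (a : ZMod 2) : signChar a ≤ 1 := by
  rw [signChar_apply]
  exact (le_abs_self _).trans_eq (by rw [abs_neg_one_pow])

lemma neg_one_pow_eq_signChar (m : ℕ) : (-1 : ℂ) ^ m = (signChar (m : ZMod 2) : ℂ) := by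
  rw [signChar_apply, ZMod.val_natCast, neg_one_pow_eq_pow_mod_two]
  push_cast
  rfl

lemma sum_signChar {G : Type*} [AddCommGroup G] [Fintype G] (φ : G →+ ZMod 2)
    [Decidable (φ = 0)] :
    ∑ g, signChar (φ g) = if φ = 0 then (Fintype.card G : ℝ) else 0 := by
  classical
  have hφ : signChar.compAddMonoidHom φ = 0 ↔ φ = 0 := by
    simp [DFunLike.ext_iff, signChar_eq_one_iff]
  simpa only [hφ, AddChar.compAddMonoidHom_apply] using
    AddChar.sum_eq_ite (signChar.compAddMonoidHom φ)

end SignChar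

section Symplectic

variable {n : ℕ}

lemma sympl_eq_dotProduct (x y : PhaseSpace n) : sympl x y = x.1 ⬝ᵥ y.2 + x.2 ⬝ᵥ y.1 := rfl

lemma sympl_add_left (x y z : PhaseSpace n) : sympl (x + y) z = sympl x z + sympl y z := by
  simp only [sympl_eq_dotProduct, Prod.fst_add, Prod.snd_add, add_dotProduct]
  ring

lemma sympl_add_right (x y z : PhaseSpace n) : sympl x (y + z) = sympl x y + sympl x z := by
  simp only [sympl_eq_dotProduct, Prod.fst_add, Prod.snd_add, dotProduct_add]
  ring

lemma sympl_comm (x y : PhaseSpace n) : sympl x y = sympl y x := by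
  simp only [sympl_eq_dotProduct, dotProduct_comm x.1, dotProduct_comm x.2]
  ring

lemma sympl_self (x : PhaseSpace n) : sympl x x = 0 := by
  rw [sympl_eq_dotProduct, dotProduct_comm x.2, CharTwo.add_self_eq_zero]

/-- The symplectic product with `x` as a linear functional. -/
def symplHom (x : PhaseSpace n) : PhaseSpace n →+ ZMod 2 :=
  AddMonoidHom.mk' (sympl x) (sympl_add_right x)

lemma symplHom_apply (x y : PhaseSpace n) : symplHom x y = sympl x y := rfl

lemma exists_sympl_ne_zero {x : PhaseSpace n} (hx : x ≠ 0) : ∃ y, sympl x y ≠ 0 := by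
  contrapose! hx
  ext i
  · simpa [sympl_eq_dotProduct] using hx (0, Pi.single i 1)
  · simpa [sympl_eq_dotProduct] using hx (Pi.single i 1, 0)

lemma symplHom_eq_zero_iff {x : PhaseSpace n} : symplHom x = 0 ↔ x = 0 := by
  refine ⟨fun h => by_contra fun hx => ?_, ?_⟩
  · obtain ⟨y, hy⟩ := exists_sympl_ne_zero hx
    exact hy (DFunLike.congr_fun h y)
  · rintro rfl
    ext y
    simp [symplHom_apply, sympl]

lemma sum_signChar_sympl (x : PhaseSpace n) :
    ∑ y, signChar (sympl x y) = if x = 0 then 4 ^ n else 0 := by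
  classical
  have hcard : (Fintype.card (PhaseSpace n) : ℝ) = 4 ^ n := by
    simp [ZMod.card, ← mul_pow]
  simpa only [symplHom_eq_zero_iff, symplHom_apply, hcard] using sum_signChar (symplHom x)

open scoped Classical in
lemma sum_signChar_sympl_addSubgroup (H : AddSubgroup (PhaseSpace n)) (x : PhaseSpace n) :
    ∑ h : H, signChar (sympl x h) =
      if x ∈ symplComplement (H : Set (PhaseSpace n)) then (Nat.card H : ℝ) else 0 := by
  have hzero : (symplHom x).comp H.subtype = 0 ↔
      x ∈ symplComplement (H : Set (PhaseSpace n)) := by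
    simp [DFunLike.ext_iff, symplComplement, symplHom_apply]
  simpa only [hzero, Nat.card_eq_fintype_card] using! sum_signChar ((symplHom x).comp H.subtype)

lemma closure_subset_symplComplement {S : Set (PhaseSpace n)} (hS : S ⊆ symplComplement S) :
    (AddSubgroup.closure S : Set (PhaseSpace n)) ⊆ symplComplement (AddSubgroup.closure S) := by
  have hle {T : Set (PhaseSpace n)} {y} (h : ∀ x ∈ T, sympl y x = 0) :
      AddSubgroup.closure T ≤ (symplHom y).ker := (AddSubgroup.closure_le _).mpr h
  refine fun x hx y hy => hle (fun z hz => ?_) hy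
  rw [sympl_comm]
  exact hle (fun w hw => hS hz w hw) hx

/-- A maximal isotropic set is a Lagrangian subgroup. -/
lemma exists_isLagrangian_of_subset_symplComplement {S : Set (PhaseSpace n)}
    (hS : S ⊆ symplComplement S) :
    ∃ L : AddSubgroup (PhaseSpace n), S ⊆ L ∧ IsLagrangian (L : Set (PhaseSpace n)) := by
  obtain ⟨T, hST, hT⟩ := Finite.exists_le_maximal
    (p := fun T : Set (PhaseSpace n) => T ⊆ symplComplement T) hS
  refine ⟨AddSubgroup.closure T, hST.trans AddSubgroup.subset_closure,
    (closure_subset_symplComplement hT.prop).antisymm fun x hx => ?_⟩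
  have hxT (y) (hy : y ∈ T) : sympl x y = 0 := hx y (AddSubgroup.subset_closure hy)
  have hinsert : insert x T ⊆ symplComplement (insert x T) := by
    rintro y (rfl | hy) z (rfl | hz)
    · exact sympl_self _
    · exact hxT z hz
    · rw [sympl_comm]
      exact hxT y hy
    · exact hT.prop hy z hz
  exact AddSubgroup.subset_closure
    (hT.le_of_ge hinsert (Set.subset_insert x T) (Set.mem_insert x T))

lemma IsLagrangian.mem_symplComplement_iff {L : AddSubgroup (PhaseSpace n)}
    (hL : IsLagrangian (L : Set (PhaseSpace n))) {x : PhaseSpace n} :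
    x ∈ symplComplement (L : Set (PhaseSpace n)) ↔ x ∈ L :=
  (Set.ext_iff.mp hL x).symm

lemma IsLagrangian.card_eq {L : AddSubgroup (PhaseSpace n)}
    (hL : IsLagrangian (L : Set (PhaseSpace n))) : (Nat.card L : ℝ) = 2 ^ n := by
  classical
  have hsum : ∑ x : PhaseSpace n, ∑ y : L, signChar (sympl x y) = (Nat.card L : ℝ) ^ 2 := by
    simp [sum_signChar_sympl_addSubgroup, hL.mem_symplComplement_iff, ← Finset.sum_filter,
      Fintype.card_subtype, sq]
  have hcomm : ∑ y : L, ∑ x : PhaseSpace n, signChar (sympl x y) = (2 ^ n : ℝ) ^ 2 := by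
    simp_rw [sympl_comm _ (Subtype.val _), sum_signChar_sympl, ZeroMemClass.coe_eq_zero,
      Finset.sum_ite_eq', Finset.mem_univ, if_true, ← pow_mul, mul_comm n, pow_mul]
    norm_num
  rw [Finset.sum_comm, hcomm] at hsum
  exact ((sq_eq_sq₀ (by positivity) (by positivity)).mp hsum).symm

end Symplectic

section Weyl

open Matrix

variable {n : ℕ}

/-- The phase `i ^ (a' · b')` of the Weyl operator at `(a, b)`. -/
noncomputable def weylPhase (x : PhaseSpace n) : ℂ :=
  Complex.I ^ ∑ i, (x.1 i).val * (x.2 i).val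

lemma weylPhase_ne_zero (x : PhaseSpace n) : weylPhase x ≠ 0 := pow_ne_zero _ Complex.I_ne_zero

lemma natCast_sum_val_mul_val (a b : Fin n → ZMod 2) :
    ((∑ i, (a i).val * (b i).val : ℕ) : ZMod 2) = a ⬝ᵥ b := by
  simp [dotProduct]

lemma weylPhase_mul_self (x : PhaseSpace n) :
    weylPhase x * weylPhase x = signChar (x.1 ⬝ᵥ x.2) := by
  rw [weylPhase, ← mul_pow, Complex.I_mul_I, neg_one_pow_eq_signChar, natCast_sum_val_mul_val]

lemma star_weylPhase (x : PhaseSpace n) :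
    star (weylPhase x) = signChar (x.1 ⬝ᵥ x.2) * weylPhase x := by
  rw [← natCast_sum_val_mul_val, ← neg_one_pow_eq_signChar, weylPhase, star_pow, ← mul_pow]
  simp

lemma Weyl_apply (x : PhaseSpace n) (k j : Fin n → ZMod 2) :
    Weyl x k j = weylPhase x * if k = j + x.1 then (signChar (x.2 ⬝ᵥ j) : ℂ) else 0 := by
  rw [Weyl, weylPhase, neg_one_pow_eq_signChar, natCast_sum_val_mul_val]

lemma Weyl_mul_Weyl (x y : PhaseSpace n) :
    Weyl x * Weyl y =
      (weylPhase x * weylPhase y * signChar (x.2 ⬝ᵥ y.1) / weylPhase (x + y)) • Weyl (x + y) := by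
  ext k j
  rw [mul_apply, Matrix.smul_apply, smul_eq_mul, Finset.sum_eq_single_of_mem (j + y.1) (by simp)
    fun l _ hl => by rw [Weyl_apply y, if_neg hl, mul_zero, mul_zero]]
  have hphase := weylPhase_ne_zero (x + y)
  have hindex : k = j + y.1 + x.1 ↔ k = j + (x + y).1 := by
    rw [Prod.fst_add, add_assoc, add_comm y.1]
  simp only [Weyl_apply, hindex, if_true]
  split_ifs
  · rw [dotProduct_add, Prod.snd_add, add_dotProduct, AddChar.map_add_eq_mul,
      AddChar.map_add_eq_mul]
    push_cast
    field_simp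
  · simp

lemma Weyl_zero : Weyl (0 : PhaseSpace n) = 1 := by
  ext k j
  simp [Weyl_apply, one_apply, weylPhase]

lemma Weyl_mul_self (x : PhaseSpace n) : Weyl x * Weyl x = 1 := by
  rw [Weyl_mul_Weyl, ZModModule.add_self, Weyl_zero, weylPhase_mul_self, dotProduct_comm x.2,
    ← Complex.ofReal_mul, signChar_mul_self]
  simp [weylPhase]

lemma isHermitian_Weyl (x : PhaseSpace n) : (Weyl x).IsHermitian := by
  ext k j
  have hindex : j = k + x.1 ↔ k = j + x.1 := by
    rw [← sub_eq_iff_eq_add, ZModModule.sub_eq_add, eq_comm]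
  rw [conjTranspose_apply, Weyl_apply, Weyl_apply, star_mul', star_weylPhase]
  simp only [hindex]
  split_ifs with h
  · have hsign : (signChar (x.1 ⬝ᵥ x.2) : ℂ) * signChar (x.1 ⬝ᵥ x.2) = 1 := by
      exact_mod_cast signChar_mul_self _
    rw [h, dotProduct_add, AddChar.map_add_eq_mul, dotProduct_comm x.2 x.1, Complex.star_def,
      Complex.conj_ofReal]
    push_cast
    linear_combination weylPhase x * signChar (x.2 ⬝ᵥ j) * hsign
  · simp

lemma Weyl_mul_comm (x y : PhaseSpace n) :
    Weyl x * Weyl y = (signChar (sympl x y) : ℂ) • (Weyl y * Weyl x) := by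
  have hsign : (signChar (x.1 ⬝ᵥ y.2) : ℂ) * signChar (x.1 ⬝ᵥ y.2) = 1 := by
    exact_mod_cast signChar_mul_self _
  rw [Weyl_mul_Weyl, Weyl_mul_Weyl y x, add_comm y x, smul_smul, sympl_eq_dotProduct,
    AddChar.map_add_eq_mul, dotProduct_comm y.2]
  congr 1
  push_cast
  linear_combination
    -(weylPhase x * weylPhase y * signChar (x.2 ⬝ᵥ y.1) / weylPhase (x + y)) * hsign

lemma Weyl_mul_Weyl_mul_Weyl (x y : PhaseSpace n) :
    Weyl y * Weyl x * Weyl y = (signChar (sympl x y) : ℂ) • Weyl x := by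
  rw [Matrix.mul_assoc, Weyl_mul_comm, Matrix.mul_smul, ← Matrix.mul_assoc, Weyl_mul_self,
    Matrix.one_mul]

/-- The phase squares to the commutation sign since `(W_x W_y)² = (-1)^[x,y] W_x² W_y²`. -/
lemma exists_Weyl_mul_Weyl_eq_smul (x y : PhaseSpace n) :
    ∃ c : ℂ, c * c = signChar (sympl x y) ∧ Weyl x * Weyl y = c • Weyl (x + y) := by
  refine ⟨_, ?_, Weyl_mul_Weyl x y⟩
  generalize hc : weylPhase x * weylPhase y * signChar (x.2 ⬝ᵥ y.1) / weylPhase (x + y) = c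
  have hsq : (c * c) • (1 : Matrix (Fin n → ZMod 2) (Fin n → ZMod 2) ℂ) =
      (signChar (sympl x y) : ℂ) • 1 := by
    calc (c * c) • (1 : Matrix _ _ ℂ)
        = Weyl x * Weyl y * (Weyl x * Weyl y) := by
          rw [Weyl_mul_Weyl, hc, smul_mul_smul_comm, Weyl_mul_self]
      _ = Weyl x * (Weyl y * Weyl x * Weyl y) := by simp only [Matrix.mul_assoc]
      _ = (signChar (sympl x y) : ℂ) • 1 := by
          rw [Weyl_mul_Weyl_mul_Weyl, Matrix.mul_smul, Weyl_mul_self]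
  simpa using congr_fun₂ hsq 0 0

lemma trace_Weyl {x : PhaseSpace n} (hx : x ≠ 0) : (Weyl x).trace = 0 := by
  obtain ⟨y, hy⟩ := exists_sympl_ne_zero hx
  have hconj := congrArg trace (Weyl_mul_Weyl_mul_Weyl x y)
  rw [trace_mul_cycle, Weyl_mul_self, Matrix.one_mul, signChar_eq_neg_one hy, trace_smul,
    smul_eq_mul, Complex.ofReal_neg, Complex.ofReal_one, neg_one_mul] at hconj
  exact self_eq_neg.mp hconj

lemma trace_Weyl_mul_Weyl (x y : PhaseSpace n) :
    (Weyl x * Weyl y).trace = if x = y then 2 ^ n else 0 := by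
  split_ifs with h
  · simp [h, Weyl_mul_self, ZMod.card]
  · rw [Weyl_mul_Weyl, trace_smul, trace_Weyl, smul_zero]
    rwa [ne_eq, ← ZModModule.sub_eq_add, sub_eq_zero]

end Weyl

section PauliCoefficients

open Matrix
open scoped Kronecker

/-- The variance of the observable `M` in the state `σ` is nonnegative. -/
lemma sq_re_trace_mul_le {m : Type*} [Fintype m] {σ M : Matrix m m ℂ}
    (hσ : σ.PosSemidef) (hσ₁ : σ.trace = 1) (hM : M.IsHermitian) :
    (M * σ).trace.re ^ 2 ≤ (M * M * σ).trace.re := by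
  classical
  set t := (M * σ).trace.re with ht
  have hcentered : (M - (t : ℂ) • (1 : Matrix m m ℂ)).IsHermitian :=
    hM.sub (by simp [IsHermitian, conjTranspose_smul])
  have hexpand : (M - (t : ℂ) • (1 : Matrix m m ℂ)) * (M - (t : ℂ) • 1) * σ =
      M * M * σ - (2 * t : ℂ) • (M * σ) + (t * t : ℂ) • σ := by
    simp only [sub_mul, mul_sub, smul_mul_assoc, mul_smul_comm, one_mul, mul_one, smul_sub,
      smul_smul]
    module
  have hnonneg := (hσ.mul_mul_conjTranspose_same (M - (t : ℂ) • 1)).trace_nonneg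
  rw [hcentered.eq, trace_mul_cycle, hexpand, trace_add, trace_sub, trace_smul, trace_smul, hσ₁,
    Complex.nonneg_iff] at hnonneg
  have hre := hnonneg.1
  simp [← ht] at hre
  linarith

variable {n : ℕ} {ρ : Matrix (Fin n → ZMod 2) (Fin n → ZMod 2) ℂ}

/-- The coefficient `tr(W_x ρ)`, real for Hermitian `ρ`, of the Weyl expansion of `2 ^ n • ρ`. -/
noncomputable def weylCoeff (ρ : Matrix (Fin n → ZMod 2) (Fin n → ZMod 2) ℂ)
    (x : PhaseSpace n) : ℝ :=
  (Weyl x * ρ).trace.re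

lemma trace_Weyl_mul_eq_weylCoeff (hρ : ρ.IsHermitian) (x : PhaseSpace n) :
    (Weyl x * ρ).trace = weylCoeff ρ x := by
  refine (Complex.conj_eq_iff_re.mp ?_).symm
  rw [← Complex.star_def, ← trace_conjTranspose, conjTranspose_mul, hρ.eq, isHermitian_Weyl,
    trace_mul_comm]

lemma weylCoeff_zero (hρ₁ : ρ.trace = 1) : weylCoeff ρ 0 = 1 := by
  rw [weylCoeff, Weyl_zero, Matrix.one_mul, hρ₁, Complex.one_re]

/-- The uncertainty relation for the observable `∑ i ∈ T, W_{x i} ⊗ W_{x i}` on two copies of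
`ρ`; doubling removes the phases from the products of Weyl operators. -/
lemma sq_sum_sq_weylCoeff_le (hρ : ρ.PosSemidef) (hρ₁ : ρ.trace = 1) {ι : Type*} (T : Finset ι)
    (x : ι → PhaseSpace n) :
    (∑ i ∈ T, weylCoeff ρ (x i) ^ 2) ^ 2 ≤
      ∑ i ∈ T, ∑ j ∈ T, signChar (sympl (x i) (x j)) * weylCoeff ρ (x i + x j) ^ 2 := by
  have htrace (y : PhaseSpace n) :
      ((Weyl y ⊗ₖ Weyl y) * (ρ ⊗ₖ ρ)).trace = ((weylCoeff ρ y ^ 2 : ℝ) : ℂ) := by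
    rw [← mul_kronecker_mul, trace_kronecker, trace_Weyl_mul_eq_weylCoeff hρ.1, ← sq]
    push_cast
    rfl
  have hmul (y z : PhaseSpace n) : (Weyl y ⊗ₖ Weyl y) * (Weyl z ⊗ₖ Weyl z) =
      (signChar (sympl y z) : ℂ) • (Weyl (y + z) ⊗ₖ Weyl (y + z)) := by
    obtain ⟨c, hc, hyz⟩ := exists_Weyl_mul_Weyl_eq_smul y z
    rw [← mul_kronecker_mul, hyz, smul_kronecker, kronecker_smul, smul_smul, hc]
  have hherm : (∑ i ∈ T, Weyl (x i) ⊗ₖ Weyl (x i)).IsHermitian := by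
    simp only [IsHermitian, conjTranspose_sum, conjTranspose_kronecker, (isHermitian_Weyl _).eq]
  have hvar := sq_re_trace_mul_le (hρ.kronecker hρ) (by rw [trace_kronecker, hρ₁, one_mul]) hherm
  rw [Finset.sum_comm]
  simpa only [Finset.sum_mul, Finset.mul_sum, trace_sum, hmul, smul_mul_assoc, trace_smul,
    htrace, smul_eq_mul, Complex.re_sum, ← Complex.ofReal_mul, Complex.ofReal_re] using hvar

lemma sq_weylCoeff_le_one (hρ : ρ.PosSemidef) (hρ₁ : ρ.trace = 1) (x : PhaseSpace n) :
    weylCoeff ρ x ^ 2 ≤ 1 := by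
  have huncertainty := sq_sum_sq_weylCoeff_le hρ hρ₁ {()} fun _ => x
  simp only [Finset.sum_singleton, sympl_self, ZModModule.add_self, AddChar.map_zero_eq_one,
    weylCoeff_zero hρ₁] at huncertainty
  exact (abs_le_of_sq_le_sq' (by rwa [one_mul] at huncertainty) zero_le_one).2

lemma sympl_self_add (x y : PhaseSpace n) : sympl x (x + y) = sympl x y := by
  rw [sympl_add_right, sympl_self, zero_add]

lemma self_add_self_add (x y : PhaseSpace n) : x + (x + y) = y := by
  rw [← add_assoc, ZModModule.add_self, zero_add]

lemma sum_sq_weylCoeff_le (hρ : ρ.PosSemidef) (hρ₁ : ρ.trace = 1) :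
    ∑ x, weylCoeff ρ x ^ 2 ≤ 2 ^ n := by
  have huncertainty := sq_sum_sq_weylCoeff_le hρ hρ₁ Finset.univ id
  have hdouble : ∑ x, ∑ y, signChar (sympl x y) * weylCoeff ρ (x + y) ^ 2 = (2 ^ n : ℝ) ^ 2 := by
    calc ∑ x, ∑ y, signChar (sympl x y) * weylCoeff ρ (x + y) ^ 2
        = ∑ x, ∑ k, signChar (sympl x k) * weylCoeff ρ k ^ 2 := by
          refine Finset.sum_congr rfl fun x _ => ?_
          rw [← Equiv.sum_comp (Equiv.addLeft x)]
          simp only [Equiv.coe_addLeft, sympl_self_add, self_add_self_add]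
      _ = ∑ k, (∑ x, signChar (sympl k x)) * weylCoeff ρ k ^ 2 := by
          rw [Finset.sum_comm]
          simp only [Finset.sum_mul, sympl_comm]
      _ = (2 ^ n) ^ 2 := by
          simp only [sum_signChar_sympl, ite_mul, zero_mul, Finset.sum_ite_eq', Finset.mem_univ,
            if_true, weylCoeff_zero hρ₁]
          rw [← pow_mul, mul_comm n, pow_mul]
          norm_num
  exact (abs_le_of_sq_le_sq' (huncertainty.trans_eq hdouble) (by positivity)).2

open scoped Classical in
lemma sq_sum_coset_sq_weylCoeff_le (hρ : ρ.PosSemidef) (hρ₁ : ρ.trace = 1)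
    (H : AddSubgroup (PhaseSpace n)) (z : PhaseSpace n) :
    (∑ h : H, weylCoeff ρ (z + h) ^ 2) ^ 2 ≤
      Nat.card H * ∑ k with k ∈ (H ∩ symplComplement H : Set (PhaseSpace n)),
        weylCoeff ρ k ^ 2 := by
  have hcoset (k : H) : ∑ g : H, signChar (sympl (z + (g : PhaseSpace n)) k) ≤
      if (k : PhaseSpace n) ∈ symplComplement (H : Set (PhaseSpace n)) then
        (Nat.card H : ℝ) else 0 := by
    rw [← sum_signChar_sympl_addSubgroup]
    simp_rw [sympl_add_left, AddChar.map_add_eq_mul, ← Finset.mul_sum,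
      fun g : H => sympl_comm (g : PhaseSpace n) k]
    refine mul_le_of_le_one_left ?_ (signChar_le_one _)
    rw [sum_signChar_sympl_addSubgroup]
    exact ite_nonneg (Nat.cast_nonneg _) le_rfl
  calc (∑ h : H, weylCoeff ρ (z + h) ^ 2) ^ 2
      ≤ ∑ g : H, ∑ h : H, signChar (sympl (z + (g : PhaseSpace n)) (z + h)) *
          weylCoeff ρ (z + g + (z + h)) ^ 2 :=
        sq_sum_sq_weylCoeff_le hρ hρ₁ Finset.univ fun h : H => z + h
    _ = ∑ g : H, ∑ k : H, signChar (sympl (z + (g : PhaseSpace n)) k) * weylCoeff ρ k ^ 2 := by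
        refine Finset.sum_congr rfl fun g _ => ?_
        rw [← Equiv.sum_comp (Equiv.addLeft g)]
        simp only [Equiv.coe_addLeft, AddSubgroup.coe_add, ← add_assoc z, sympl_self_add,
          self_add_self_add]
    _ = ∑ k : H, (∑ g : H, signChar (sympl (z + (g : PhaseSpace n)) k)) *
          weylCoeff ρ k ^ 2 := by
        rw [Finset.sum_comm]
        simp only [Finset.sum_mul]
    _ ≤ ∑ k : H, (if (k : PhaseSpace n) ∈ symplComplement (H : Set (PhaseSpace n)) then
          (Nat.card H : ℝ) else 0) * weylCoeff ρ k ^ 2 :=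
        Finset.sum_le_sum fun k _ => mul_le_mul_of_nonneg_right (hcoset k) (sq_nonneg _)
    _ = _ := by
        simp only [Set.mem_inter_iff, SetLike.mem_coe, ← Finset.filter_filter, Finset.mul_sum]
        rw [Finset.sum_filter]
        simp only [ite_mul, zero_mul]
        rw [Finset.sum_subtype _ (p := (· ∈ H)) fun _ => Finset.mem_filter_univ _]

end PauliCoefficients

/-! ### Stabilizer fidelity -/

section StabilizerStates

open Matrix

variable {n : ℕ} {φ : (Fin n → ZMod 2) → ℂ}

lemma dotProduct_star_self_eq_ofReal (v : (Fin n → ZMod 2) → ℂ) :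
    v ⬝ᵥ star v = ((∑ j, Complex.normSq (v j) : ℝ) : ℂ) := by
  simp [dotProduct, Complex.mul_conj]

lemma isHermitian_outer (φ : (Fin n → ZMod 2) → ℂ) : (outer φ).IsHermitian := by
  ext i j
  simp [outer, vecMulVec_apply, mul_comm]

lemma trace_outer (hφ : ∑ j, Complex.normSq (φ j) = 1) : (outer φ).trace = 1 := by
  rw [outer, trace_vecMulVec]
  exact (dotProduct_star_self_eq_ofReal φ).trans (by rw [hφ, Complex.ofReal_one])

lemma outer_mul_outer_self (hφ : ∑ j, Complex.normSq (φ j) = 1) :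
    outer φ * outer φ = outer φ := by
  have hnorm : φ ⬝ᵥ star φ = 1 := by
    rw [dotProduct_star_self_eq_ofReal, hφ, Complex.ofReal_one]
  rw [dotProduct_comm] at hnorm
  change vecMulVec φ (star φ) * vecMulVec φ (star φ) = vecMulVec φ (star φ)
  rw [vecMulVec_mul_vecMulVec, hnorm, one_smul]

lemma exists_forall_Weyl_mulVec_eq_smul (T : Finset (PhaseSpace n))
    (hT : ∀ x ∈ T, ∀ y ∈ T, sympl x y = 0) :
    ∃ v : (Fin n → ZMod 2) → ℂ, v ≠ 0 ∧ ∀ x ∈ T, ∃ s : ℝ, Weyl x *ᵥ v = (s : ℂ) • v := by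
  induction T using Finset.induction_on with
  | empty => exact ⟨1, one_ne_zero, by simp⟩
  | insert x T _ ih =>
    obtain ⟨v, hv, heig⟩ := ih fun y hy z hz =>
      hT y (Finset.mem_insert_of_mem hy) z (Finset.mem_insert_of_mem hz)
    by_cases hneg : Weyl x *ᵥ v = -v
    · refine ⟨v, hv, (Finset.forall_mem_insert _ _ _).mpr ⟨⟨-1, by simp [hneg]⟩, heig⟩⟩
    · refine ⟨v + Weyl x *ᵥ v, fun h => hneg (eq_neg_of_add_eq_zero_right h),
        (Finset.forall_mem_insert _ _ _).mpr ⟨⟨1, ?_⟩, fun y hy => ?_⟩⟩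
      · rw [mulVec_add, mulVec_mulVec, Weyl_mul_self, one_mulVec, add_comm, Complex.ofReal_one,
          one_smul]
      · obtain ⟨s, hs⟩ := heig y hy
        refine ⟨s, ?_⟩
        rw [mulVec_add, mulVec_mulVec, Weyl_mul_comm,
          hT y (Finset.mem_insert_of_mem hy) x (Finset.mem_insert_self _ _),
          AddChar.map_zero_eq_one, Complex.ofReal_one, one_smul, ← mulVec_mulVec, hs, mulVec_smul,
          smul_add]

/-- The unit vector `φ` is a common eigenvector of the Weyl operators on `L`, with real
eigenvalues `s`, which are then signs. -/
structure IsStabilizedBy (L : AddSubgroup (PhaseSpace n)) (s : L → ℝ)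
    (φ : (Fin n → ZMod 2) → ℂ) : Prop where
  sum_normSq : ∑ j, Complex.normSq (φ j) = 1
  Weyl_mulVec_eq (x : L) : Weyl x *ᵥ φ = (s x : ℂ) • φ

lemma exists_isStabilizedBy {L : AddSubgroup (PhaseSpace n)}
    (hL : (L : Set (PhaseSpace n)) ⊆ symplComplement L) :
    ∃ (s : L → ℝ) (φ : (Fin n → ZMod 2) → ℂ), IsStabilizedBy L s φ := by
  classical
  obtain ⟨v, hv, heig⟩ := exists_forall_Weyl_mulVec_eq_smul {x | x ∈ L}
    fun x hx y hy => hL (Finset.mem_filter_univ x |>.mp hx) y (Finset.mem_filter_univ y |>.mp hy)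
  choose s hs using fun x : L => heig x (by simp)
  set N := ∑ j, Complex.normSq (v j) with hN
  have hN_pos : 0 < N := by
    obtain ⟨j, hj⟩ := Function.ne_iff.mp hv
    exact Finset.sum_pos' (fun i _ => Complex.normSq_nonneg _)
      ⟨j, Finset.mem_univ _, Complex.normSq_pos.mpr hj⟩
  refine ⟨s, ((√N)⁻¹ : ℝ) • v, ?_, fun x => ?_⟩
  · simp only [Pi.smul_apply, Complex.real_smul, Complex.normSq_mul, Complex.normSq_ofReal,
      ← Finset.mul_sum, ← hN]
    rw [← mul_inv, Real.mul_self_sqrt hN_pos.le, inv_mul_cancel₀ hN_pos.ne']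
  · rw [mulVec_smul, hs, smul_comm]

namespace IsStabilizedBy

variable {L : AddSubgroup (PhaseSpace n)} {s : L → ℝ}

lemma Weyl_mul_outer (h : IsStabilizedBy L s φ) (x : L) :
    Weyl x * outer φ = (s x : ℂ) • outer φ := by
  rw [outer, mul_vecMulVec, h.Weyl_mulVec_eq, smul_vecMulVec]

lemma trace_Weyl_mul_outer (h : IsStabilizedBy L s φ) (x : L) :
    (Weyl x * outer φ).trace = (s x : ℂ) := by
  rw [h.Weyl_mul_outer, trace_smul, trace_outer h.sum_normSq, smul_eq_mul, mul_one]

lemma sign_zero (h : IsStabilizedBy L s φ) : s 0 = 1 := by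
  have htrace := h.trace_Weyl_mul_outer 0
  rw [ZeroMemClass.coe_zero, Weyl_zero, Matrix.one_mul, trace_outer h.sum_normSq] at htrace
  exact_mod_cast htrace.symm

lemma sign_mul_self (h : IsStabilizedBy L s φ) (x : L) : s x * s x = 1 := by
  have htrace : (Weyl x * (Weyl x * outer φ)).trace = (s x : ℂ) * s x := by
    rw [h.Weyl_mul_outer, Matrix.mul_smul, trace_smul, h.trace_Weyl_mul_outer, smul_eq_mul]
  rw [← Matrix.mul_assoc, Weyl_mul_self, Matrix.one_mul, trace_outer h.sum_normSq] at htrace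
  exact_mod_cast htrace.symm

lemma Weyl_mul_outer_mul_Weyl (h : IsStabilizedBy L s φ) (x : L) :
    Weyl x * outer φ * Weyl x = outer φ := by
  have hright : outer φ * Weyl x = (s x : ℂ) • outer φ := by
    simpa [(isHermitian_outer φ).eq, (isHermitian_Weyl _).eq] using
      congrArg conjTranspose (h.Weyl_mul_outer x)
  rw [h.Weyl_mul_outer, smul_mul_assoc, hright, smul_smul, ← Complex.ofReal_mul, h.sign_mul_self,
    Complex.ofReal_one, one_smul]

lemma trace_Weyl_mul_outer_eq_zero (h : IsStabilizedBy L s φ) {x : PhaseSpace n}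
    (hx : x ∉ symplComplement (L : Set (PhaseSpace n))) : (Weyl x * outer φ).trace = 0 := by
  obtain ⟨g, hg, hxg⟩ : ∃ g ∈ L, sympl x g ≠ 0 := by
    simpa [symplComplement] using hx
  have hneg : (Weyl x * outer φ).trace = -(Weyl x * outer φ).trace := by
    calc (Weyl x * outer φ).trace
        = (Weyl x * (Weyl g * outer φ * Weyl g)).trace := by
          rw [h.Weyl_mul_outer_mul_Weyl ⟨g, hg⟩]
      _ = (Weyl g * Weyl x * Weyl g * outer φ).trace := by
          rw [← Matrix.mul_assoc, trace_mul_comm]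
          simp only [Matrix.mul_assoc]
      _ = -(Weyl x * outer φ).trace := by
          rw [Weyl_mul_Weyl_mul_Weyl, signChar_eq_neg_one hxg]
          simp
  exact self_eq_neg.mp hneg

lemma isStabilizerState (h : IsStabilizedBy L s φ) (hL : IsLagrangian (L : Set (PhaseSpace n))) :
    IsStabilizerState φ := by
  have hweylSet : weylSet (outer φ) = L := by
    ext x
    refine ⟨fun hx => ?_, fun hx => ?_⟩
    · by_contra hxL
      rw [weylSet, Set.mem_ofPred_eq, h.trace_Weyl_mul_outer_eq_zero
        (mt hL.mem_symplComplement_iff.mp hxL)] at hx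
      norm_num at hx
    · have hsign := mul_self_eq_one_iff.mp (h.sign_mul_self ⟨x, hx⟩)
      rw [weylSet, Set.mem_ofPred_eq, h.trace_Weyl_mul_outer ⟨x, hx⟩]
      exact_mod_cast hsign
  exact ⟨h.sum_normSq, hweylSet ▸ hL⟩

open scoped Classical in
/-- The difference of the two sides has Hilbert–Schmidt norm zero. -/
lemma outer_eq (h : IsStabilizedBy L s φ) (hL : IsLagrangian (L : Set (PhaseSpace n))) :
    outer φ = (2 ^ n : ℂ)⁻¹ • ∑ x : L, (s x : ℂ) • Weyl (x : PhaseSpace n) := by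
  set P := (2 ^ n : ℂ)⁻¹ • ∑ x : L, (s x : ℂ) • Weyl (x : PhaseSpace n) with hP
  have htrace {M : Matrix (Fin n → ZMod 2) (Fin n → ZMod 2) ℂ}
      (hM : ∀ x : L, (Weyl x * M).trace = (s x : ℂ)) : (P * M).trace = 1 := by
    have hcard : (Fintype.card L : ℂ) = 2 ^ n := by
      rw [← Nat.card_eq_fintype_card]
      exact_mod_cast congrArg ((↑) : ℝ → ℂ) hL.card_eq
    simp only [hP, smul_mul_assoc, Finset.sum_mul, trace_smul, trace_sum, hM, smul_eq_mul,
      ← Complex.ofReal_mul, h.sign_mul_self, Complex.ofReal_one, Finset.sum_const,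
      Finset.card_univ, nsmul_eq_mul, mul_one, hcard]
    exact inv_mul_cancel₀ (by positivity)
  have hPP : (P * P).trace = 1 := htrace fun x => by
    simp [hP, Finset.mul_sum, trace_sum, trace_Weyl_mul_Weyl, mul_comm]
  have hPO : (P * outer φ).trace = 1 := htrace h.trace_Weyl_mul_outer
  have hPherm : P.IsHermitian := by
    simp [IsHermitian, hP, conjTranspose_smul, conjTranspose_sum, (isHermitian_Weyl _).eq]
  have hdist : ((outer φ - P)ᴴ * (outer φ - P)).trace = 0 := by
    rw [conjTranspose_sub, (isHermitian_outer φ).eq, hPherm.eq, sub_mul, mul_sub, mul_sub,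
      trace_sub, trace_sub, trace_sub, outer_mul_outer_self h.sum_normSq, hPP, hPO,
      trace_mul_comm, hPO, trace_outer h.sum_normSq]
    ring
  exact sub_eq_zero.mp (trace_conjTranspose_mul_self_eq_zero_iff.mp hdist)

lemma Weyl_mulVec (h : IsStabilizedBy L s φ) (y : PhaseSpace n) :
    IsStabilizedBy L (fun x => signChar (sympl x y) * s x) (Weyl y *ᵥ φ) where
  sum_normSq := by
    have hnorm : (Weyl y *ᵥ φ) ⬝ᵥ star (Weyl y *ᵥ φ) = φ ⬝ᵥ star φ := by
      rw [star_mulVec, (isHermitian_Weyl y).eq, dotProduct_comm, dotProduct_mulVec,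
        vecMul_vecMul, Weyl_mul_self, vecMul_one, dotProduct_comm]
    rw [dotProduct_star_self_eq_ofReal, dotProduct_star_self_eq_ofReal, h.sum_normSq] at hnorm
    exact_mod_cast hnorm
  Weyl_mulVec_eq x := by
    rw [mulVec_mulVec, Weyl_mul_comm, smul_mulVec, ← mulVec_mulVec, h.Weyl_mulVec_eq, mulVec_smul,
      smul_smul, Complex.ofReal_mul]

end IsStabilizedBy

end StabilizerStates

section StabilizerFidelity

open Matrix

variable {n : ℕ} {ρ : Matrix (Fin n → ZMod 2) (Fin n → ZMod 2) ℂ}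

lemma trace_mul_nonneg_of_isIdempotentElem {m : Type*} [Fintype m] {σ P : Matrix m m ℂ}
    (hσ : σ.PosSemidef) (hP : P.IsHermitian) (hPP : IsIdempotentElem P) :
    0 ≤ (σ * P).trace := by
  have hnonneg := (hσ.mul_mul_conjTranspose_same P).trace_nonneg
  rwa [hP.eq, trace_mul_cycle, hPP.eq, trace_mul_comm] at hnonneg

lemma trace_mul_outer_nonneg (hρ : ρ.PosSemidef) {φ : (Fin n → ZMod 2) → ℂ}
    (hφ : ∑ j, Complex.normSq (φ j) = 1) : 0 ≤ (ρ * outer φ).trace :=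
  trace_mul_nonneg_of_isIdempotentElem hρ (isHermitian_outer φ) (outer_mul_outer_self hφ)

lemma bddAbove_range_re_trace_mul_outer (hρ : ρ.PosSemidef) :
    BddAbove (Set.range fun φ : {φ : (Fin n → ZMod 2) → ℂ // IsStabilizerState φ} =>
      (ρ * outer φ.1).trace.re) := by
  refine ⟨ρ.trace.re, ?_⟩
  rintro _ ⟨⟨φ, hφ, -⟩, rfl⟩
  have hnonneg := trace_mul_nonneg_of_isIdempotentElem hρ
    (isHermitian_one.sub (isHermitian_outer φ))
    (IsIdempotentElem.one_sub (outer_mul_outer_self hφ))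
  rw [mul_sub, Matrix.mul_one, trace_sub, sub_nonneg] at hnonneg
  exact (Complex.le_def.mp hnonneg).1

lemma re_trace_mul_outer_le_stabFidelity (hρ : ρ.PosSemidef) {φ : (Fin n → ZMod 2) → ℂ}
    (hφ : IsStabilizerState φ) : (ρ * outer φ).trace.re ≤ stabFidelity ρ :=
  le_ciSup (bddAbove_range_re_trace_mul_outer hρ) ⟨φ, hφ⟩

/-- Parseval's identity for the symplectic Fourier transform. -/
lemma sum_sq_sum_signChar_sympl_mul {ι : Type*} [Fintype ι] {g : ι → PhaseSpace n}
    (hg : Function.Injective g) (c : ι → ℝ) :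
    ∑ y, (∑ i, signChar (sympl (g i) y) * c i) ^ 2 = 4 ^ n * ∑ i, c i ^ 2 := by
  classical
  have horth (i j : ι) : ∑ y, signChar (sympl (g i) y) * signChar (sympl (g j) y) =
      if i = j then 4 ^ n else 0 := by
    simp_rw [← AddChar.map_add_eq_mul, ← sympl_add_left, sum_signChar_sympl,
      ← ZModModule.sub_eq_add, sub_eq_zero, hg.eq_iff]
  calc ∑ y, (∑ i, signChar (sympl (g i) y) * c i) ^ 2
      = ∑ y, ∑ i, ∑ j, signChar (sympl (g i) y) * signChar (sympl (g j) y) * (c i * c j) := by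
        simp only [sq, Finset.sum_mul_sum, mul_mul_mul_comm]
    _ = ∑ i, ∑ j, (∑ y, signChar (sympl (g i) y) * signChar (sympl (g j) y)) * (c i * c j) := by
        rw [Finset.sum_comm]
        refine Finset.sum_congr rfl fun i _ => ?_
        rw [Finset.sum_comm]
        simp only [Finset.sum_mul]
    _ = 4 ^ n * ∑ i, c i ^ 2 := by
        simp only [horth, ite_mul, zero_mul, Finset.sum_ite_eq, Finset.mem_univ, if_true,
          Finset.mul_sum, sq]

open scoped Classical in
lemma IsStabilizedBy.trace_mul_outer {L : AddSubgroup (PhaseSpace n)} {s : L → ℝ}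
    {φ : (Fin n → ZMod 2) → ℂ} (h : IsStabilizedBy L s φ)
    (hL : IsLagrangian (L : Set (PhaseSpace n))) (hρ : ρ.IsHermitian) :
    (ρ * outer φ).trace = (((2 ^ n)⁻¹ * ∑ x : L, s x * weylCoeff ρ x : ℝ) : ℂ) := by
  simp [trace_mul_comm ρ, h.outer_eq hL, Finset.sum_mul, trace_sum,
    trace_Weyl_mul_eq_weylCoeff hρ]

open scoped Classical in
/-- The vectors `W_y φ` are the stabilizer states of `L`, and `q y = 2 ^ n ⟨W_y φ, ρ W_y φ⟩` is the
Fourier transform of `tr(W_x ρ)` on `L` up to signs; Parseval turns `∑ q² ≤ max q · ∑ q` into the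
claim. -/
lemma sum_sq_weylCoeff_le_stabFidelity (hρ : ρ.PosSemidef) (hρ₁ : ρ.trace = 1)
    {L : AddSubgroup (PhaseSpace n)} (hL : IsLagrangian (L : Set (PhaseSpace n))) :
    ∑ x : L, weylCoeff ρ x ^ 2 ≤ 2 ^ n * stabFidelity ρ := by
  obtain ⟨s, φ, hφ⟩ := exists_isStabilizedBy hL.le
  let q (y : PhaseSpace n) : ℝ := ∑ x : L, signChar (sympl x y) * (s x * weylCoeff ρ x)
  have htrace (y) : (ρ * outer (Weyl y *ᵥ φ)).trace = (((2 ^ n)⁻¹ * q y : ℝ) : ℂ) := by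
    simp only [(hφ.Weyl_mulVec y).trace_mul_outer hL hρ.1, q, mul_assoc]
  have hq_nonneg (y) : 0 ≤ q y := by
    have hnonneg := trace_mul_outer_nonneg hρ (hφ.Weyl_mulVec y).sum_normSq
    rw [htrace, Complex.zero_le_real] at hnonneg
    exact (mul_nonneg_iff_of_pos_left (by positivity)).mp hnonneg
  have hq_le (y) : q y ≤ 2 ^ n * stabFidelity ρ := by
    have hle := re_trace_mul_outer_le_stabFidelity hρ ((hφ.Weyl_mulVec y).isStabilizerState hL)
    rwa [htrace, Complex.ofReal_re, inv_mul_le_iff₀ (by positivity)] at hle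
  have hq_sum : ∑ y, q y = 4 ^ n := by
    rw [Finset.sum_comm]
    simp only [← Finset.sum_mul, sum_signChar_sympl, ZeroMemClass.coe_eq_zero, ite_mul, zero_mul,
      Finset.sum_ite_eq', Finset.mem_univ, if_true, hφ.sign_zero, ZeroMemClass.coe_zero,
      weylCoeff_zero hρ₁, mul_one]
  have hparseval : ∑ y, q y ^ 2 = 4 ^ n * ∑ x : L, weylCoeff ρ x ^ 2 := by
    rw [sum_sq_sum_signChar_sympl_mul Subtype.val_injective]
    simp only [mul_pow, sq (s _), hφ.sign_mul_self, one_mul]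
  refine le_of_mul_le_mul_left ?_ (show (0 : ℝ) < 4 ^ n by positivity)
  calc 4 ^ n * ∑ x : L, weylCoeff ρ x ^ 2
      = ∑ y, q y ^ 2 := hparseval.symm
    _ ≤ ∑ y, 2 ^ n * stabFidelity ρ * q y := Finset.sum_le_sum fun y _ => by
        rw [sq]
        exact mul_le_mul_of_nonneg_right (hq_le y) (hq_nonneg y)
    _ = 4 ^ n * (2 ^ n * stabFidelity ρ) := by rw [← Finset.mul_sum, hq_sum, mul_comm]

open scoped Classical in
lemma sq_sum_coset_sq_weylCoeff_le_stabFidelity (hρ : ρ.PosSemidef) (hρ₁ : ρ.trace = 1)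
    (H : AddSubgroup (PhaseSpace n)) (z : PhaseSpace n) :
    (∑ h : H, weylCoeff ρ (z + h) ^ 2) ^ 2 ≤ Nat.card H * (2 ^ n * stabFidelity ρ) := by
  set R : Set (PhaseSpace n) := H ∩ symplComplement H
  obtain ⟨L, hRL, hL⟩ := exists_isLagrangian_of_subset_symplComplement
    (S := R) fun x hx y hy => hx.2 y hy.1
  calc (∑ h : H, weylCoeff ρ (z + h) ^ 2) ^ 2
      ≤ Nat.card H * ∑ k with k ∈ R, weylCoeff ρ k ^ 2 := sq_sum_coset_sq_weylCoeff_le hρ hρ₁ H z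
    _ ≤ Nat.card H * ∑ k with k ∈ L, weylCoeff ρ k ^ 2 := by
        refine mul_le_mul_of_nonneg_left (Finset.sum_le_sum_of_subset_of_nonneg ?_
          fun _ _ _ => sq_nonneg _) (Nat.cast_nonneg _)
        exact Finset.monotone_filter_right _ fun k _ hk => hRL hk
    _ = Nat.card H * ∑ x : L, weylCoeff ρ x ^ 2 := by
        rw [Finset.sum_subtype _ (p := (· ∈ L)) fun _ => Finset.mem_filter_univ _]
    _ ≤ Nat.card H * (2 ^ n * stabFidelity ρ) :=
        mul_le_mul_of_nonneg_left (sum_sq_weylCoeff_le_stabFidelity hρ hρ₁ hL) (Nat.cast_nonneg _)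

end StabilizerFidelity

section LevelSets

variable {α : Type*} {F : α → ℝ}

lemma mul_card_filter_le_sum (T : Finset α) (hF : ∀ x, 0 ≤ F x) (t : ℝ) :
    t * ({x ∈ T | t ≤ F x}.card : ℝ) ≤ ∑ x ∈ T, F x := by
  calc t * ({x ∈ T | t ≤ F x}.card : ℝ)
      ≤ ∑ x ∈ T with t ≤ F x, F x := by
        rw [mul_comm, ← nsmul_eq_mul]
        exact Finset.card_nsmul_le_sum _ _ _ fun x hx => (Finset.mem_filter.mp hx).2
    _ ≤ ∑ x ∈ T, F x :=
        Finset.sum_le_sum_of_subset_of_nonneg (Finset.filter_subset _ _) fun x _ _ => hF x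

lemma sum_mul_le_card_filter_add (T : Finset α) {G : α → ℝ} (hF : ∀ x, 0 ≤ F x)
    (hF₁ : ∀ x, F x ≤ 1) (hG : ∀ x, 0 ≤ G x) (hG₁ : ∀ x, G x ≤ 1) {t : ℝ} (ht : 0 ≤ t) :
    ∑ x ∈ T, G x * F x ≤ {x ∈ T | t ≤ F x}.card + t * ∑ x ∈ T, G x := by
  rw [← Finset.sum_boole, Finset.mul_sum, ← Finset.sum_add_distrib]
  refine Finset.sum_le_sum fun x _ => ?_
  split_ifs with hx
  · exact (mul_le_one₀ (hG₁ x) (hF x) (hF₁ x)).trans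
      (le_add_of_nonneg_right (mul_nonneg ht (hG x)))
  · rw [zero_add, mul_comm t]
    exact mul_le_mul_of_nonneg_left (not_le.mp hx).le (hG x)

end LevelSets

lemma sum_coset_eq {G M : Type*} [AddCommGroup G] [Fintype G] [AddCommMonoid M]
    (H : AddSubgroup G) [DecidablePred (· ∈ H)] (z : G) (F : G → M) :
    ∑ x with x - z ∈ H, F x = ∑ h : H, F (z + h) := by
  refine (Finset.sum_bij (fun (h : H) _ => z + (h : G)) ?_ ?_ ?_ fun _ _ => rfl).symm
  · simp
  · simp
  · exact fun x hx => ⟨⟨x - z, by simpa using hx⟩, Finset.mem_univ _, add_sub_cancel z x⟩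

section LargeSpectrum

variable {n : ℕ} {ρ : Matrix (Fin n → ZMod 2) (Fin n → ZMod 2) ℂ} {γ : ℝ}

/-- The phase space points at which `tr(W_x ρ)² ≥ t`. -/
noncomputable def largeSpectrum (ρ : Matrix (Fin n → ZMod 2) (Fin n → ZMod 2) ℂ) (t : ℝ) :
    Finset (PhaseSpace n) :=
  {x | t ≤ weylCoeff ρ x ^ 2}

lemma four_pow_mul_sum_pFun_pow_three :
    4 ^ n * ∑ x, pFun ρ x ^ 3 = (∑ x, (weylCoeff ρ x ^ 2) ^ 3) / 2 ^ n := by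
  have hpFun (x) : pFun ρ x ^ 3 = (weylCoeff ρ x ^ 2) ^ 3 / (2 ^ n) ^ 3 := by
    rw [← div_pow]
    rfl
  have hfour : (4 : ℝ) ^ n = (2 ^ n) ^ 2 := by
    rw [← pow_mul, mul_comm, pow_mul]
    norm_num
  simp only [hpFun, ← Finset.sum_div, hfour]
  field_simp

lemma mul_two_pow_le_sum_weylCoeff (hγ : γ ≤ 4 ^ n * ∑ x, pFun ρ x ^ 3) :
    γ * 2 ^ n ≤ ∑ x, (weylCoeff ρ x ^ 2) ^ 3 := by
  rwa [four_pow_mul_sum_pFun_pow_three, le_div_iff₀ (by positivity)] at hγ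

lemma le_one_of_le_sum_pFun_pow_three (hρ : ρ.PosSemidef) (hρ₁ : ρ.trace = 1)
    (hγ : γ ≤ 4 ^ n * ∑ x, pFun ρ x ^ 3) : γ ≤ 1 := by
  refine le_of_mul_le_mul_right ?_ (show (0 : ℝ) < 2 ^ n by positivity)
  calc γ * 2 ^ n
      ≤ ∑ x, (weylCoeff ρ x ^ 2) ^ 3 := mul_two_pow_le_sum_weylCoeff hγ
    _ ≤ ∑ x, weylCoeff ρ x ^ 2 := Finset.sum_le_sum fun x _ =>
        pow_le_of_le_one (sq_nonneg _) (sq_weylCoeff_le_one hρ hρ₁ x) three_ne_zero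
    _ ≤ 1 * 2 ^ n := by simpa using sum_sq_weylCoeff_le hρ hρ₁

lemma mul_two_pow_le_card_largeSpectrum (hρ : ρ.PosSemidef) (hρ₁ : ρ.trace = 1) (hγ₀ : 0 ≤ γ)
    (hγ : γ ≤ 4 ^ n * ∑ x, pFun ρ x ^ 3) :
    γ / 2 * 2 ^ n ≤ (largeSpectrum ρ (γ / 2)).card := by
  have hγ_half : 0 ≤ γ / 2 := by positivity
  have hsplit := sum_mul_le_card_filter_add Finset.univ (fun x => sq_nonneg (weylCoeff ρ x))
    (sq_weylCoeff_le_one hρ hρ₁) (fun x => sq_nonneg (weylCoeff ρ x))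
    (sq_weylCoeff_le_one hρ hρ₁) hγ_half
  have hcube : ∑ x, (weylCoeff ρ x ^ 2) ^ 3 ≤ ∑ x, weylCoeff ρ x ^ 2 * weylCoeff ρ x ^ 2 :=
    Finset.sum_le_sum fun x _ => by
      rw [pow_succ]
      exact mul_le_mul_of_nonneg_right
        (pow_le_of_le_one (sq_nonneg _) (sq_weylCoeff_le_one hρ hρ₁ x) two_ne_zero) (sq_nonneg _)
  have hlight : γ / 2 * ∑ x, weylCoeff ρ x ^ 2 ≤ γ / 2 * 2 ^ n :=
    mul_le_mul_of_nonneg_left (sum_sq_weylCoeff_le hρ hρ₁) hγ_half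
  rw [largeSpectrum]
  linarith [mul_two_pow_le_sum_weylCoeff hγ]

lemma mul_card_largeSpectrum_le (hρ : ρ.PosSemidef) (hρ₁ : ρ.trace = 1) (t : ℝ) :
    t * (largeSpectrum ρ t).card ≤ 2 ^ n :=
  (mul_card_filter_le_sum Finset.univ (fun _ => sq_nonneg _) t).trans
    (sum_sq_weylCoeff_le hρ hρ₁)

/-- The pairs in `largeSpectrum ρ t` whose sum lies in `largeSpectrum ρ (t ^ 2 / 2)`: a dense
graph along which `largeSpectrum ρ t` is almost closed under addition. -/
noncomputable def largeSpectrumPairs (ρ : Matrix (Fin n → ZMod 2) (Fin n → ZMod 2) ℂ) (t : ℝ) :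
    Finset (PhaseSpace n × PhaseSpace n) :=
  {w ∈ largeSpectrum ρ t ×ˢ largeSpectrum ρ t | t ^ 2 / 2 ≤ weylCoeff ρ (w.1 + w.2) ^ 2}

lemma mul_sq_card_largeSpectrum_le_card_pairs (hρ : ρ.PosSemidef) (hρ₁ : ρ.trace = 1) {t : ℝ}
    (ht : 0 ≤ t) :
    t ^ 2 / 2 * (largeSpectrum ρ t).card ^ 2 ≤ (largeSpectrumPairs ρ t).card := by
  set S := largeSpectrum ρ t
  have hsum : t * S.card ≤ ∑ x ∈ S, weylCoeff ρ x ^ 2 := by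
    rw [mul_comm, ← nsmul_eq_mul]
    exact Finset.card_nsmul_le_sum _ _ _ fun x hx => (Finset.mem_filter.mp hx).2
  have hpairs := sum_mul_le_card_filter_add (S ×ˢ S) (G := 1)
    (fun w => sq_nonneg (weylCoeff ρ (w.1 + w.2)))
    (fun w => sq_weylCoeff_le_one hρ hρ₁ (w.1 + w.2)) (fun _ => zero_le_one) (fun _ => le_rfl)
    (t := t ^ 2 / 2) (by positivity)
  have hchain : (t * S.card) ^ 2 ≤
      (largeSpectrumPairs ρ t).card + t ^ 2 / 2 * (S.card : ℝ) ^ 2 := by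
    calc (t * S.card) ^ 2
        ≤ (∑ x ∈ S, weylCoeff ρ x ^ 2) ^ 2 := pow_le_pow_left₀ (by positivity) hsum 2
      _ ≤ ∑ x ∈ S, ∑ y ∈ S, signChar (sympl x y) * weylCoeff ρ (x + y) ^ 2 :=
          sq_sum_sq_weylCoeff_le hρ hρ₁ S id
      _ ≤ ∑ w ∈ S ×ˢ S, weylCoeff ρ (w.1 + w.2) ^ 2 := by
          rw [Finset.sum_product]
          exact Finset.sum_le_sum fun x _ => Finset.sum_le_sum fun y _ =>
            mul_le_of_le_one_left (sq_nonneg _) (signChar_le_one _)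
      _ ≤ (largeSpectrumPairs ρ t).card + t ^ 2 / 2 * (S.card : ℝ) ^ 2 := by
          simpa [largeSpectrumPairs, S, sq] using hpairs
  linarith [mul_pow t (S.card : ℝ) 2]

open scoped Classical in
lemma sq_mul_card_largeSpectrum_coset_le (hρ : ρ.PosSemidef) (hρ₁ : ρ.trace = 1) {t : ℝ}
    (ht : 0 ≤ t) (H : AddSubgroup (PhaseSpace n)) (z : PhaseSpace n) :
    (t * ({x ∈ largeSpectrum ρ t | x - z ∈ H}.card : ℝ)) ^ 2 ≤
      Nat.card H * (2 ^ n * stabFidelity ρ) := by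
  refine (pow_le_pow_left₀ (by positivity) ?_ 2).trans
    (sq_sum_coset_sq_weylCoeff_le_stabFidelity hρ hρ₁ H z)
  rw [largeSpectrum, Finset.filter_comm, ← sum_coset_eq H z fun x => weylCoeff ρ x ^ 2]
  exact mul_card_filter_le_sum _ (fun _ => sq_nonneg _) t

/-- Here `N = 2 ^ n` and `F` is the fidelity; `s` and `s'` are the cardinalities of the large
spectra `S` and `S'` at the levels `d` and `g = d ^ 2 / 2`, `Q` is the number of pairs, `K = |H|`,
and `m = |S ∩ (z + H)|`. -/
lemma pow_mul_pow_le_of_largeSpectrum_bounds {Q K m s s' N F g d : ℝ} (hK : 0 < K) (hs' : 0 ≤ s')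
    (hN : 0 < N) (hg : 0 < g) (hd : 0 < d) (hcoset : Q ^ 133 * K ≤ m ^ 2 * s' ^ 89 * s ^ 176)
    (hF : (d * m) ^ 2 ≤ K * (N * F)) (hQ : g * s ^ 2 ≤ Q) (hs'N : g * s' ≤ N)
    (hNs : d * N ≤ s) : g ^ 222 * d ^ 92 ≤ F := by
  have hs : 0 < s := (mul_pos hd hN).trans_le hNs
  refine le_of_mul_le_mul_right ?_ (show 0 < N ^ 90 * s ^ 176 * K by positivity)
  calc g ^ 222 * d ^ 92 * (N ^ 90 * s ^ 176 * K)
      = g ^ 222 * d ^ 2 * (d * N) ^ 90 * (s ^ 176 * K) := by ring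
    _ ≤ g ^ 222 * d ^ 2 * s ^ 90 * (s ^ 176 * K) := by gcongr
    _ = d ^ 2 * g ^ 89 * ((g * s ^ 2) ^ 133 * K) := by ring
    _ ≤ d ^ 2 * g ^ 89 * (Q ^ 133 * K) := by gcongr
    _ ≤ d ^ 2 * g ^ 89 * (m ^ 2 * s' ^ 89 * s ^ 176) := by gcongr
    _ = (d * m) ^ 2 * (g * s') ^ 89 * s ^ 176 := by ring
    _ ≤ (K * (N * F)) * N ^ 89 * s ^ 176 := by
        have hKNF := (sq_nonneg (d * m)).trans hF
        gcongr
    _ = F * (N ^ 90 * s ^ 176 * K) := by ring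

end LargeSpectrum

theorem soundness_general {n : ℕ} {ρ : Matrix (Fin n → ZMod 2) (Fin n → ZMod 2) ℂ}
    (hρ : ρ.PosSemidef) (hρ₁ : ρ.trace = 1) {γ : ℝ} (hγ₀ : 0 < γ)
    (hγ : γ ≤ 4 ^ n * ∑ x, pFun ρ x ^ 3) :
    (1 / 2) ^ 758 * γ ^ 536 ≤ stabFidelity ρ := by
  classical
  have ht : 0 < γ / 2 := half_pos hγ₀
  have hS := mul_two_pow_le_card_largeSpectrum hρ hρ₁ hγ₀.le hγ
  have hQ := mul_sq_card_largeSpectrum_le_card_pairs hρ hρ₁ ht.le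
  have hP : (largeSpectrumPairs ρ (γ / 2)).Nonempty := by
    have hS_pos : (0 : ℝ) < (largeSpectrum ρ (γ / 2)).card :=
      lt_of_lt_of_le (by positivity) hS
    exact Finset.card_pos.mp (Nat.cast_pos.mp (lt_of_lt_of_le (by positivity) hQ))
  obtain ⟨H, z, hcoset⟩ := EntropicPFR.exists_coset_card_le
    (S := largeSpectrum ρ (γ / 2)) (S' := largeSpectrum ρ ((γ / 2) ^ 2 / 2)) hP fun w hw => by
      simpa [largeSpectrumPairs, largeSpectrum, and_assoc] using hw
  calc (1 / 2) ^ 758 * γ ^ 536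
      = ((γ * (1 / 2)) ^ 2 * (1 / 2)) ^ 222 * (γ * (1 / 2)) ^ 92 := by
        generalize (1 / 2 : ℝ) = a
        ring
    _ = ((γ / 2) ^ 2 / 2) ^ 222 * (γ / 2) ^ 92 := by simp only [mul_one_div]
    _ ≤ stabFidelity ρ := pow_mul_pow_le_of_largeSpectrum_bounds
        (Nat.cast_pos.mpr Nat.card_pos) (Nat.cast_nonneg _) (by positivity) (by positivity) ht
        hcoset (sq_mul_card_largeSpectrum_coset_le hρ hρ₁ ht.le H z) hQ
        (mul_card_largeSpectrum_le hρ hρ₁ _) hS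

/-- There is a universal constant c > 0 such that for every n-qubit
mixed state ρ and γ > 0: if 4^n ∑_x p_ρ(x)³ ≥ γ then F(ρ) ≥ c γ^{1089}. -/
theorem soundness :
    ∃ c : ℝ, 0 < c ∧
      ∀ (n : ℕ) (ρ : Matrix (Fin n → ZMod 2) (Fin n → ZMod 2) ℂ),
        ρ.PosSemidef → ρ.trace = 1 →
        ∀ γ : ℝ, 0 < γ →
        γ ≤ 4 ^ n * ∑ x, (pFun ρ x) ^ 3 →
        c * γ ^ 1089 ≤ stabFidelity ρ :=
  ⟨(1 / 2) ^ 758, by positivity, fun _ _ hρ hρ₁ _ hγ₀ hγ =>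
    (mul_le_mul_of_nonneg_left (pow_le_pow_of_le_one hγ₀.le
      (le_one_of_le_sum_pFun_pow_three hρ hρ₁ hγ) (by norm_num)) (by positivity)).trans
      (soundness_general hρ hρ₁ hγ₀ hγ)⟩
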